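/- arXiv:2402.15503 — 6 statements merged into one kernel-verified Lean document; each statement's English description precedes it below -/
import Mathlib

section
/- Let n ≥ 1 and λ > n/2 be real. Let u : ℝⁿ → ℝ be a C^∞ function with compact support whose support is disjoint from some neighborhood of the origin (0 ∉ tsupport u). Then ∫_{ℝⁿ} |u(x)|²/|x|^{2λ} dv ≤ (4/(2λ−n)²) ∫_{ℝⁿ} |∇u(x)|²/|x|^{2λ−2} dv, where dv is Lebesgue measure. -/
open MeasureTheory

/-!
Dilating `f` inside `∫ k(x) f(x) dx`, where `k` is homogeneous of degree `s`, gives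
`∫ k(x) f(t x) dx = t ^ (-(s + n)) ∫ k(x) f(x) dx`. Differentiating both sides at `t = 1` yields
`∫ k(x) Df(x) x dx = -(s + n) ∫ k(x) f(x) dx`, with no derivative falling on the weight `k`, so any
norm and any Haar measure will do. For `f = ‖u‖²` and `k = ‖x‖ ^ (-2λ)` this reads
`(2λ - n) ∫ ‖u‖² / ‖x‖ ^ (2λ) = ∫ 2 ⟪u, Du(x) x⟫ / ‖x‖ ^ (2λ)`. Young's inequality with weight
`|2λ - n| / 2` bounds the right-hand side by half of the absolute value of the left-hand side plus
a multiple of the gradient integral.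
-/

open Filter Function Module Set Topology
open scoped RealInnerProductSpace

theorem hasDerivAt_setIntegral_of_isCompact {𝕜 X G : Type*} [RCLike 𝕜] [TopologicalSpace X]
    [T2Space X] [MeasurableSpace X] [OpensMeasurableSpace X] {μ : Measure X}
    [IsFiniteMeasureOnCompacts μ] [NormedAddCommGroup G] [NormedSpace ℝ G] [NormedSpace 𝕜 G]
    {F F' : 𝕜 → X → G} {K : Set X} {s : Set 𝕜} {t₀ : 𝕜} (hK : IsCompact K) (hs : s ∈ 𝓝 t₀)
    (hF : ∀ t ∈ s, ContinuousOn (F t) K) (hF' : ContinuousOn (uncurry F') (s ×ˢ K))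
    (hderiv : ∀ t ∈ s, ∀ x ∈ K, HasDerivAt (F · x) (F' t x) t) :
    HasDerivAt (fun t ↦ ∫ x in K, F t x ∂μ) (∫ x in K, F' t₀ x ∂μ) t₀ := by
  obtain ⟨T, hT_nhds, hTs, hT⟩ := local_compact_nhds hs
  obtain ⟨C, hC⟩ := (hT.prod hK).exists_bound_of_continuousOn (hF'.mono (prod_mono_left hTs))
  have hF'_t₀ : ContinuousOn (F' t₀) K :=
    hF'.comp (Continuous.prodMk_right t₀).continuousOn fun x hx ↦ ⟨mem_of_mem_nhds hs, hx⟩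
  have ae_mem : ∀ᵐ x ∂μ.restrict K, x ∈ K := ae_restrict_mem hK.measurableSet
  refine (hasDerivAt_integral_of_dominated_loc_of_deriv_le hT_nhds (bound := fun _ ↦ C)
    ?_ ((hF t₀ (mem_of_mem_nhds hs)).integrableOn_compact hK)
    (hF'_t₀.integrableOn_compact hK).aestronglyMeasurable ?_
    (integrableOn_const hK.measure_ne_top) ?_).2
  · filter_upwards [hs] with t ht
    exact ((hF t ht).integrableOn_compact hK).aestronglyMeasurable
  · filter_upwards [ae_mem] with x hx t ht using hC (t, x) ⟨ht, hx⟩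
  · filter_upwards [ae_mem] with x hx t ht using hderiv t (hTs ht) x hx

theorem exists_isCompact_zero_notMem_of_smul_mem {𝕜 E : Type*} [GroupWithZero 𝕜]
    [TopologicalSpace 𝕜] [ContinuousInv₀ 𝕜] [Zero E] [MulActionWithZero 𝕜 E] [TopologicalSpace E]
    [ContinuousSMul 𝕜 E] {T : Set 𝕜} (hT : IsCompact T) (hT0 : 0 ∉ T) {K : Set E}
    (hK : IsCompact K) (h0 : 0 ∉ K) :
    ∃ L : Set E, IsCompact L ∧ 0 ∉ L ∧ ∀ t ∈ T, ∀ x, t • x ∈ K → x ∈ L := by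
  have ne_zero : ∀ t ∈ T, t ≠ 0 := fun t ht h ↦ hT0 (h ▸ ht)
  refine ⟨(fun p : 𝕜 × E ↦ p.1⁻¹ • p.2) '' (T ×ˢ K), (hT.prod hK).image_of_continuousOn ?_, ?_, ?_⟩
  · exact (continuousOn_fst.inv₀ fun p hp ↦ ne_zero _ hp.1).smul continuousOn_snd
  · rintro ⟨⟨t, y⟩, ⟨ht, hy⟩, hty⟩
    have hy0 : y = 0 := by
      rw [← smul_inv_smul₀ (ne_zero t ht) y, show t⁻¹ • y = 0 from hty, smul_zero]
    exact h0 (hy0 ▸ hy)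
  · exact fun t ht x hx ↦ ⟨(t, t • x), ⟨ht, hx⟩, inv_smul_smul₀ (ne_zero t ht) x⟩

section Dilation

variable {E G : Type*} [NormedAddCommGroup E] [NormedSpace ℝ E] [NormedAddCommGroup G]
  [NormedSpace ℝ G] {f : E → G} {k : E → ℝ}

theorem hasDerivAt_comp_smul {t : ℝ} {x : E} (hf : DifferentiableAt ℝ f (t • x)) :
    HasDerivAt (fun r : ℝ ↦ f (r • x)) (fderiv ℝ f (t • x) x) t := by
  have hline : HasDerivAt (fun r : ℝ ↦ r • x) x t := by
    simpa using (hasDerivAt_id t).smul_const x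
  exact hf.hasFDerivAt.comp_hasDerivAt t hline

variable [MeasurableSpace E] [BorelSpace E] (μ : Measure E)

theorem hasDerivAt_integral_smul_comp_smul [IsFiniteMeasureOnCompacts μ]
    (hk : ContinuousOn k {0}ᶜ) (hf : ContDiff ℝ 1 f) (hc : HasCompactSupport f)
    (h0 : 0 ∉ tsupport f) :
    HasDerivAt (fun t : ℝ ↦ ∫ x, k x • f (t • x) ∂μ) (∫ x, k x • fderiv ℝ f x x ∂μ) 1 := by
  have hT : Icc (1 / 2 : ℝ) 2 ∈ 𝓝 1 := Icc_mem_nhds (by norm_num) (by norm_num)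
  obtain ⟨K, hK, hK0, mem_K⟩ := exists_isCompact_zero_notMem_of_smul_mem
    (isCompact_Icc (a := (1 / 2 : ℝ)) (b := 2)) (by norm_num) hc h0
  have hkK : ContinuousOn k K := hk.mono fun x hx h ↦ hK0 (h ▸ hx)
  have hf' : Continuous (fderiv ℝ f) := hf.continuous_fderiv one_ne_zero
  have on_K : ∀ t ∈ Icc (1 / 2 : ℝ) 2,
      ∫ x in K, k x • f (t • x) ∂μ = ∫ x, k x • f (t • x) ∂μ := fun t ht ↦
    setIntegral_eq_integral_of_forall_compl_eq_zero fun x hx ↦ by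
      rw [image_eq_zero_of_notMem_tsupport (mt (mem_K t ht x) hx), smul_zero]
  have deriv_on_K : ∫ x in K, k x • fderiv ℝ f ((1 : ℝ) • x) x ∂μ =
      ∫ x, k x • fderiv ℝ f x x ∂μ := by
    simp_rw [one_smul]
    refine setIntegral_eq_integral_of_forall_compl_eq_zero fun x hx ↦ ?_
    have hxf : x ∉ tsupport f := fun h ↦ hx (mem_K 1 (mem_of_mem_nhds hT) x (by rwa [one_smul]))
    rw [fderiv_of_notMem_tsupport ℝ hxf, zero_apply, smul_zero]
  have deriv_continuousOn :
      ContinuousOn (uncurry fun (t : ℝ) x ↦ k x • fderiv ℝ f (t • x) x) (Icc (1 / 2) 2 ×ˢ K) :=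
    (hkK.comp continuousOn_snd fun p hp ↦ hp.2).smul
      ((hf'.comp continuous_smul).clm_apply continuous_snd).continuousOn
  have deriv_integral_on_K :=
    hasDerivAt_setIntegral_of_isCompact (μ := μ) (F := fun (t : ℝ) x ↦ k x • f (t • x)) hK hT
      (fun t _ ↦ hkK.smul (hf.continuous.comp (continuous_const_smul t)).continuousOn)
      deriv_continuousOn fun t _ x _ ↦
        (hasDerivAt_comp_smul (hf.differentiable one_ne_zero (t • x))).const_smul (k x)
  rw [← deriv_on_K]
  exact deriv_integral_on_K.congr_of_eventuallyEq
    (mem_of_superset hT fun t ht ↦ (on_K t ht).symm)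

variable [FiniteDimensional ℝ E] [μ.IsAddHaarMeasure] {s : ℝ}

theorem integral_smul_comp_smul_of_homogeneous
    (hk : ∀ t > 0, ∀ x, k (t • x) = t ^ s * k x) (f : E → G) {t : ℝ} (ht : 0 < t) :
    ∫ x, k x • f (t • x) ∂μ = t ^ (-(s + finrank ℝ E)) • ∫ x, k x • f x ∂μ := by
  have hkt : ∀ x, k x = t ^ (-s) * k (t • x) := fun x ↦ by
    rw [hk t ht, ← mul_assoc, ← Real.rpow_add ht, neg_add_cancel, Real.rpow_zero, one_mul]
  calc ∫ x, k x • f (t • x) ∂μ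
      = ∫ x, t ^ (-s) • (k (t • x) • f (t • x)) ∂μ := by simp_rw [← mul_smul, ← hkt]
    _ = t ^ (-s) • (t ^ finrank ℝ E)⁻¹ • ∫ x, k x • f x ∂μ := by
      rw [integral_smul, Measure.integral_comp_smul_of_nonneg μ (fun x ↦ k x • f x) t (hR := ht.le)]
    _ = t ^ (-(s + finrank ℝ E)) • ∫ x, k x • f x ∂μ := by
      rw [smul_smul, neg_add, Real.rpow_add ht, Real.rpow_neg ht.le (finrank ℝ E : ℝ),
        Real.rpow_natCast]

theorem integral_smul_fderiv_apply_self_of_homogeneous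
    (hk : ContinuousOn k {0}ᶜ) (hks : ∀ t > 0, ∀ x, k (t • x) = t ^ s * k x)
    (hf : ContDiff ℝ 1 f) (hc : HasCompactSupport f) (h0 : 0 ∉ tsupport f) :
    ∫ x, k x • fderiv ℝ f x x ∂μ = -(s + finrank ℝ E) • ∫ x, k x • f x ∂μ := by
  have hpow : HasDerivAt (fun t : ℝ ↦ t ^ (-(s + finrank ℝ E)) • ∫ x, k x • f x ∂μ)
      (-(s + finrank ℝ E) • ∫ x, k x • f x ∂μ) 1 := by
    simpa using (Real.hasDerivAt_rpow_const (p := -(s + finrank ℝ E))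
      (Or.inl one_ne_zero)).smul_const (∫ x, k x • f x ∂μ)
  refine (hasDerivAt_integral_smul_comp_smul μ hk hf hc h0).unique
    (hpow.congr_of_eventuallyEq ?_)
  filter_upwards [lt_mem_nhds one_pos] with t ht
  exact integral_smul_comp_smul_of_homogeneous μ hks f ht

end Dilation

section Hardy

variable {E F : Type*} [NormedAddCommGroup E]

theorem continuousOn_norm_rpow_compl_zero (s : ℝ) :
    ContinuousOn (fun x : E ↦ ‖x‖ ^ s) {0}ᶜ :=
  continuousOn_id.norm.rpow_const fun _ hx ↦ Or.inl (norm_ne_zero_iff.2 hx)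

theorem tsupport_norm_sq_subset {X : Type*} [TopologicalSpace X] [SeminormedAddCommGroup F]
    (g : X → F) : tsupport (fun x ↦ ‖g x‖ ^ 2) ⊆ tsupport g :=
  tsupport_comp_subset (g := fun v : F ↦ ‖v‖ ^ 2) (by simp) g

theorem integrable_norm_sq_div_norm_rpow [MeasurableSpace E] [BorelSpace E] (μ : Measure E)
    [IsFiniteMeasureOnCompacts μ] [SeminormedAddCommGroup F] {g : E → F} (hg : Continuous g)
    (hc : HasCompactSupport g) (h0 : 0 ∉ tsupport g) (s : ℝ) :
    Integrable (fun x ↦ ‖g x‖ ^ 2 / ‖x‖ ^ s) μ := by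
  have ne_zero : ∀ x ∈ tsupport g, x ≠ 0 := fun x hx h ↦ h0 (h ▸ hx)
  have hcont : ContinuousOn (fun x ↦ ‖g x‖ ^ 2 / ‖x‖ ^ s) (tsupport g) :=
    ContinuousOn.div (by fun_prop) ((continuousOn_norm_rpow_compl_zero s).mono ne_zero)
      fun x hx ↦ (Real.rpow_pos_of_pos (norm_pos_iff.2 (ne_zero x hx)) s).ne'
  refine (integrableOn_iff_integrable_of_support_subset fun x hx ↦ ?_).1
    (hcont.integrableOn_compact hc)
  by_contra hxg
  exact hx (by simp [image_eq_zero_of_notMem_tsupport hxg])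

variable [NormedSpace ℝ E] [NormedAddCommGroup F] [InnerProductSpace ℝ F]

theorem abs_two_mul_inner_apply_self_div_norm_rpow_le {ε : ℝ} (hε : 0 < ε) (s : ℝ) (v : F)
    (L : E →L[ℝ] F) (x : E) :
    |2 * ⟪v, L x⟫ / ‖x‖ ^ s| ≤
      ε * (‖v‖ ^ 2 / ‖x‖ ^ s) + ε⁻¹ * (‖L‖ ^ 2 / ‖x‖ ^ (s - 2)) := by
  rcases eq_or_ne x 0 with rfl | hx
  · simp only [map_zero, inner_zero_right, mul_zero, zero_div, abs_zero]
    positivity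
  have hx' : 0 < ‖x‖ := norm_pos_iff.2 hx
  calc |2 * ⟪v, L x⟫ / ‖x‖ ^ s| = 2 * |⟪v, L x⟫| / ‖x‖ ^ s := by
        rw [abs_div, abs_mul, abs_two, abs_of_pos (Real.rpow_pos_of_pos hx' s)]
    _ ≤ 2 * (‖v‖ * (‖L‖ * ‖x‖)) / ‖x‖ ^ s := by
        gcongr
        exact (abs_real_inner_le_norm v (L x)).trans (by gcongr; exact L.le_opNorm x)
    _ ≤ (ε * ‖v‖ ^ 2 + ε⁻¹ * (‖L‖ * ‖x‖) ^ 2) / ‖x‖ ^ s := by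
        rw [← mul_assoc]
        gcongr
        exact two_mul_le_add_mul_sq hε
    _ = ε * (‖v‖ ^ 2 / ‖x‖ ^ s) + ε⁻¹ * (‖L‖ ^ 2 / ‖x‖ ^ (s - 2)) := by
        rw [Real.rpow_sub hx', Real.rpow_two]
        field_simp

variable [FiniteDimensional ℝ E] [MeasurableSpace E] [BorelSpace E] (μ : Measure E)
  [μ.IsAddHaarMeasure] {u : E → F}

theorem integral_two_mul_inner_fderiv_apply_self_div_norm_rpow (s : ℝ) (hu : ContDiff ℝ 1 u)
    (hc : HasCompactSupport u) (h0 : 0 ∉ tsupport u) :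
    ∫ x, 2 * ⟪u x, fderiv ℝ u x x⟫ / ‖x‖ ^ s ∂μ =
      (s - finrank ℝ E) * ∫ x, ‖u x‖ ^ 2 / ‖x‖ ^ s ∂μ := by
  have hsupp : tsupport (fun x ↦ ‖u x‖ ^ 2) ⊆ tsupport u := tsupport_norm_sq_subset u
  have hfderiv : ∀ x, fderiv ℝ (fun y ↦ ‖u y‖ ^ 2) x x = 2 * ⟪u x, fderiv ℝ u x x⟫ := fun x ↦ by
    rw [((hu.differentiable one_ne_zero x).hasFDerivAt.norm_sq).fderiv]
    simp
  have homogeneous : ∀ t > 0, ∀ x : E, ‖t • x‖ ^ (-s) = t ^ (-s) * ‖x‖ ^ (-s) := fun t ht x ↦ by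
    rw [norm_smul_of_nonneg ht.le, Real.mul_rpow ht.le (norm_nonneg x)]
  have euler := integral_smul_fderiv_apply_self_of_homogeneous μ
    (continuousOn_norm_rpow_compl_zero (-s)) homogeneous (hu.norm_sq ℝ)
    (hc.of_isClosed_subset (isClosed_tsupport _) hsupp) (fun h ↦ h0 (hsupp h))
  simp_rw [hfderiv, Real.rpow_neg (norm_nonneg _), smul_eq_mul, inv_mul_eq_div] at euler
  rw [euler]
  ring

theorem hardy_type_inequality_general {lam : ℝ} (hlam : 2 * lam ≠ finrank ℝ E)
    (hu : ContDiff ℝ 1 u) (hc : HasCompactSupport u) (h0 : 0 ∉ tsupport u) :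
    ∫ x, ‖u x‖ ^ 2 / ‖x‖ ^ (2 * lam) ∂μ ≤
      4 / (2 * lam - finrank ℝ E) ^ 2 *
        ∫ x, ‖fderiv ℝ u x‖ ^ 2 / ‖x‖ ^ (2 * lam - 2) ∂μ := by
  set I := ∫ x, ‖u x‖ ^ 2 / ‖x‖ ^ (2 * lam) ∂μ
  set J := ∫ x, ‖fderiv ℝ u x‖ ^ 2 / ‖x‖ ^ (2 * lam - 2) ∂μ
  set c := |2 * lam - finrank ℝ E| with hc_def
  have hc_pos : 0 < c := abs_pos.2 (sub_ne_zero.2 hlam)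
  have hI : Integrable (fun x ↦ ‖u x‖ ^ 2 / ‖x‖ ^ (2 * lam)) μ :=
    integrable_norm_sq_div_norm_rpow μ hu.continuous hc h0 _
  have hJ : Integrable (fun x ↦ ‖fderiv ℝ u x‖ ^ 2 / ‖x‖ ^ (2 * lam - 2)) μ :=
    integrable_norm_sq_div_norm_rpow μ (hu.continuous_fderiv one_ne_zero) (hc.fderiv ℝ)
      (fun h ↦ h0 (tsupport_fderiv_subset ℝ h)) _
  have young : c * I ≤ c / 2 * I + (c / 2)⁻¹ * J := by
    calc c * I = ‖∫ x, 2 * ⟪u x, fderiv ℝ u x x⟫ / ‖x‖ ^ (2 * lam) ∂μ‖ := by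
          rw [integral_two_mul_inner_fderiv_apply_self_div_norm_rpow μ _ hu hc h0, norm_mul,
            Real.norm_eq_abs, Real.norm_of_nonneg (integral_nonneg fun x ↦ by positivity)]
      _ ≤ ∫ x, c / 2 * (‖u x‖ ^ 2 / ‖x‖ ^ (2 * lam)) +
            (c / 2)⁻¹ * (‖fderiv ℝ u x‖ ^ 2 / ‖x‖ ^ (2 * lam - 2)) ∂μ :=
          norm_integral_le_of_norm_le ((hI.const_mul _).add (hJ.const_mul _)) <| .of_forall fun x ↦
            abs_two_mul_inner_apply_self_div_norm_rpow_le (half_pos hc_pos) _ _ _ x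
      _ = c / 2 * I + (c / 2)⁻¹ * J := by
          rw [integral_add (hI.const_mul _) (hJ.const_mul _), integral_const_mul,
            integral_const_mul]
  calc I
    _ = (c / 2)⁻¹ * (c * I - c / 2 * I) := by
      field_simp
      ring
    _ ≤ (c / 2)⁻¹ * ((c / 2)⁻¹ * J) := by
      gcongr
      linarith
    _ = 4 / (2 * lam - finrank ℝ E) ^ 2 * J := by
      rw [← sq_abs, ← hc_def]
      field_simp
      ring

end Hardy

/-- Hardy-type inequality (Lemma 2.1): for `u ∈ C_c^∞(ℝⁿ)` supported away from the
origin and `λ > n/2`,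
`∫ |u|²/|x|^{2λ} ≤ 4/(2λ-n)² ∫ |∇u|²/|x|^{2λ-2}`. -/
theorem hardy_type_inequality (n : ℕ) (hn : 1 ≤ n) (lam : ℝ) (hlam : (n : ℝ) / 2 < lam)
    (u : EuclideanSpace ℝ (Fin n) → ℝ)
    (hu : ContDiff ℝ (⊤ : ℕ∞) u) (hsupp : HasCompactSupport u)
    (h0 : (0 : EuclideanSpace ℝ (Fin n)) ∉ tsupport u) :
    ∫ x : EuclideanSpace ℝ (Fin n), |u x| ^ 2 / ‖x‖ ^ (2 * lam) ≤
      4 / (2 * lam - n) ^ 2 *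
        ∫ x : EuclideanSpace ℝ (Fin n), ‖fderiv ℝ u x‖ ^ 2 / ‖x‖ ^ (2 * lam - 2) := by
  have hne : 2 * lam ≠ Module.finrank ℝ (EuclideanSpace ℝ (Fin n)) := by
    rw [finrank_euclideanSpace_fin]
    linarith
  simpa using hardy_type_inequality_general volume hne
    (hu.of_le (by exact_mod_cast le_top)) hsupp h0
end

section
/- Let n ≥ 1. There exist a constant C₀ > 0 and a threshold λ₀ > n/2 such that for every real λ ≥ λ₀ and every C^∞ function u : ℝⁿ → ℝ with compact support whose support is disjoint from some neighborhood of the origin, the function x ↦ u(x)/|x|^{λ−1} (set to 0 at x = 0) satisfies ∫_{ℝⁿ} |∇(u(x)/|x|^{λ−1})|² dv ≤ C₀ ∫_{ℝⁿ} |∇u(x)|²/|x|^{2λ−2} dv. -/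
open MeasureTheory Classical

/-!
Let `n = dim E` and `s = 1 - λ`. Integrating `div (‖w‖² x)` shows that `x · ∇ + n / 2` is
skew-adjoint, so `(c + n / 2)² ∫ ‖w‖² ≤ ∫ ‖x · ∇w - c w‖²` for every constant `c`. For
`w = |x| ^ (s - 1) u` and `c = s - 1` the right-hand side is `∫ ‖|x| ^ (s - 1) (x · ∇u)‖²`,
which gives the weighted Hardy inequality
`(s - 1 + n / 2)² ∫ |x| ^ (2 s - 2) |u|² ≤ ∫ |x| ^ (2 s) |∇u|²`.
It absorbs the second term of `|∇(|x| ^ s u)| ≤ |x| ^ s |∇u| + |s| |x| ^ (s - 1) |u|`.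
-/

open Module Topology
open scoped RealInnerProductSpace

section EulerOperator

variable {E : Type*} [NormedAddCommGroup E] [NormedSpace ℝ E] [MeasurableSpace E] [BorelSpace E]
  {μ : Measure E}

lemma integrable_clm_smul_fderiv_apply [IsFiniteMeasureOnCompacts μ] {F : Type*}
    [NormedAddCommGroup F] [NormedSpace ℝ F] {f : E → F} (hf : ContDiff ℝ 1 f)
    (hc : HasCompactSupport f) (L : E →L[ℝ] ℝ) (v : E) :
    Integrable (fun x => L x • fderiv ℝ f x v) μ :=
  (L.continuous.smul ((hf.continuous_fderiv one_ne_zero).clm_apply continuous_const)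
    ).integrable_of_hasCompactSupport (hc.fderiv_apply (𝕜 := ℝ) v).smul_left

variable [FiniteDimensional ℝ E] [μ.IsAddHaarMeasure]

lemma integral_clm_smul_fderiv_apply {F : Type*} [NormedAddCommGroup F] [NormedSpace ℝ F]
    {f : E → F} (hf : ContDiff ℝ 1 f) (hc : HasCompactSupport f) (L : E →L[ℝ] ℝ) (v : E) :
    ∫ x, L x • fderiv ℝ f x v ∂μ = -(L v • ∫ x, f x ∂μ) := by
  have hLf : Integrable (fun x => L x • f x) μ :=
    (L.continuous.smul hf.continuous).integrable_of_hasCompactSupport hc.smul_left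
  have hLf' : Integrable (fun x => fderiv ℝ L x v • f x) μ := by
    simpa using! (hf.continuous.integrable_of_hasCompactSupport hc).smul (L v)
  rw [integral_smul_fderiv_eq_neg_fderiv_smul_of_integrable hLf'
    (integrable_clm_smul_fderiv_apply hf hc L v) hLf (fun x _ => L.differentiableAt)
    (fun x _ => hf.differentiable one_ne_zero x)]
  simp [integral_smul]

lemma integral_fderiv_apply_self {F : Type*} [NormedAddCommGroup F] [NormedSpace ℝ F]
    {f : E → F} (hf : ContDiff ℝ 1 f) (hc : HasCompactSupport f) :
    ∫ x, fderiv ℝ f x x ∂μ = -((finrank ℝ E : ℝ) • ∫ x, f x ∂μ) := by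
  let b := finBasis ℝ E
  let L i : E →L[ℝ] ℝ := (b.coord i).toContinuousLinearMap
  have expand x : fderiv ℝ f x x = ∑ i, L i x • fderiv ℝ f x (b i) := by
    conv_lhs => rw [← b.sum_repr x, map_sum]
    simp [L, b.sum_repr]
  calc ∫ x, fderiv ℝ f x x ∂μ = ∑ i, ∫ x, L i x • fderiv ℝ f x (b i) ∂μ := by
        simp_rw [expand]
        exact integral_finsetSum _ fun i _ => integrable_clm_smul_fderiv_apply hf hc (L i) (b i)
    _ = ∑ i, -(L i (b i) • ∫ x, f x ∂μ) := by
        simp_rw [integral_clm_smul_fderiv_apply hf hc]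
    _ = -((finrank ℝ E : ℝ) • ∫ x, f x ∂μ) := by
        simp [L, Nat.cast_smul_eq_nsmul]

variable {F : Type*} [NormedAddCommGroup F] [InnerProductSpace ℝ F] {w : E → F}

lemma integral_inner_fderiv_apply_self (hw : ContDiff ℝ 1 w) (hc : HasCompactSupport w) :
    ∫ x, ⟪w x, fderiv ℝ w x x⟫ ∂μ = -(finrank ℝ E / 2 * ∫ x, ‖w x‖ ^ 2 ∂μ) := by
  have hderiv x : fderiv ℝ (fun y => ‖w y‖ ^ 2) x x = 2 * ⟪w x, fderiv ℝ w x x⟫ := by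
    simp [(hw.differentiable one_ne_zero x).hasFDerivAt.norm_sq.fderiv]
  have heuler := integral_fderiv_apply_self (μ := μ) (hw.norm_sq ℝ)
    (hc.comp_left (g := fun z => ‖z‖ ^ 2) (by simp))
  simp_rw [hderiv, integral_const_mul, smul_eq_mul] at heuler
  linarith

lemma sq_mul_integral_norm_sq_le_integral_norm_fderiv_apply_self_sub_sq
    (hw : ContDiff ℝ 1 w) (hc : HasCompactSupport w) (c : ℝ) :
    (c + finrank ℝ E / 2) ^ 2 * ∫ x, ‖w x‖ ^ 2 ∂μ ≤
      ∫ x, ‖fderiv ℝ w x x - c • w x‖ ^ 2 ∂μ := by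
  set t : ℝ := c + finrank ℝ E / 2 with ht
  have hradial_cont : Continuous fun x => fderiv ℝ w x x :=
    (hw.continuous_fderiv one_ne_zero).clm_apply continuous_id
  have hradial_supp : HasCompactSupport fun x => fderiv ℝ w x x :=
    (hc.fderiv (𝕜 := ℝ)).mono fun x hx h => hx (by simp [h])
  have hw_memLp : MemLp w (2 : ℕ) μ := hw.continuous.memLp_of_hasCompactSupport hc
  have hint : Integrable (fun x => ‖w x‖ ^ 2) μ := hw_memLp.integrable_norm_pow two_ne_zero
  have hint_inner : Integrable (fun x => ⟪w x, fderiv ℝ w x x⟫) μ :=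
    (hw.continuous.inner hradial_cont).integrable_of_hasCompactSupport
      (hc.mono fun x hx h => hx (by simp [h]))
  have hint_sub : Integrable (fun x => ‖fderiv ℝ w x x - c • w x‖ ^ 2) μ :=
    ((hradial_cont.memLp_of_hasCompactSupport hradial_supp).sub
      (hw_memLp.const_smul c)).integrable_norm_pow two_ne_zero
  have hpoint x : (2 * t * c - t ^ 2) * ‖w x‖ ^ 2 - 2 * t * ⟪w x, fderiv ℝ w x x⟫ ≤
      ‖fderiv ℝ w x x - c • w x‖ ^ 2 := by
    -- The left side minus the right side is `-‖(x · ∇w - c w) + t w‖²`.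
    have hsq := sq_nonneg ‖(fderiv ℝ w x x - c • w x) + t • w x‖
    rw [norm_add_sq_real, norm_smul, mul_pow, Real.norm_eq_abs, sq_abs, inner_smul_right,
      inner_sub_left, inner_smul_left, real_inner_self_eq_norm_sq, real_inner_comm] at hsq
    simp only [conj_trivial] at hsq
    linarith
  calc t ^ 2 * ∫ x, ‖w x‖ ^ 2 ∂μ
      = ∫ x, ((2 * t * c - t ^ 2) * ‖w x‖ ^ 2 - 2 * t * ⟪w x, fderiv ℝ w x x⟫) ∂μ := by
        rw [integral_sub (hint.const_mul _) (hint_inner.const_mul _), integral_const_mul,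
          integral_const_mul, integral_inner_fderiv_apply_self hw hc]
        rw [ht]; ring
    _ ≤ ∫ x, ‖fderiv ℝ w x x - c • w x‖ ^ 2 ∂μ :=
        integral_mono ((hint.const_mul _).sub (hint_inner.const_mul _)) hint_sub hpoint

end EulerOperator

section NormRpowSMul

variable {E F : Type*} [NormedAddCommGroup E] [NormedAddCommGroup F] [NormedSpace ℝ F] {u : E → F}

lemma ite_inv_norm_rpow_smul_eq (hu0 : u 0 = 0) (lam : ℝ) :
    (fun y => if y = 0 then 0 else (‖y‖ ^ (lam - 1))⁻¹ • u y) = fun y => ‖y‖ ^ (1 - lam) • u y := by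
  ext y
  split_ifs with hy
  · simp [hy, hu0]
  · rw [← Real.rpow_neg (norm_nonneg y), neg_sub]

lemma norm_rpow_sub_one_smul_clm_apply_self_le [NormedSpace ℝ E] (L : E →L[ℝ] F) (x : E) (s : ℝ) :
    ‖‖x‖ ^ (s - 1) • L x‖ ≤ ‖‖x‖ ^ s • L‖ := by
  rcases eq_or_ne x 0 with rfl | hx
  · simp
  · calc
      ‖‖x‖ ^ (s - 1) • L x‖ ≤ ‖x‖ ^ (s - 1) * (‖L‖ * ‖x‖) := by
        rw [norm_smul, Real.norm_of_nonneg (by positivity)]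
        gcongr
        exact L.le_opNorm x
      _ = ‖‖x‖ ^ s • L‖ := by
        rw [norm_smul, Real.norm_of_nonneg (by positivity),
          Real.rpow_sub_one (norm_ne_zero_iff.2 hx)]
        field_simp

lemma norm_sq_div_rpow_eq_norm_rpow_smul_sq {r : ℝ} (hr : 0 ≤ r) (a : F) (lam : ℝ) :
    ‖a‖ ^ 2 / r ^ (2 * lam - 2) = ‖r ^ (1 - lam) • a‖ ^ 2 := by
  rw [norm_smul, Real.norm_rpow_of_nonneg hr, Real.norm_of_nonneg hr, mul_pow,
    ← Real.rpow_mul_natCast hr, div_eq_inv_mul, ← Real.rpow_neg hr]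
  congr 2
  push_cast
  ring

lemma norm_rpow_smul_eventuallyEq_zero (h0 : (0 : E) ∉ tsupport u) (s : ℝ) :
    (fun y => ‖y‖ ^ s • u y) =ᶠ[𝓝 0] fun _ => 0 := by
  filter_upwards [notMem_tsupport_iff_eventuallyEq.1 h0] with y hy
  simp [hy]

variable {E : Type*} [NormedAddCommGroup E] [InnerProductSpace ℝ E] {u : E → F}

lemma hasFDerivAt_norm_rpow_of_ne_zero {x : E} (hx : x ≠ 0) (s : ℝ) :
    HasFDerivAt (fun y : E => ‖y‖ ^ s) ((s * ‖x‖ ^ (s - 2)) • innerSL ℝ x) x := by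
  have hsq := (hasStrictFDerivAt_norm_sq x).hasFDerivAt.rpow_const (p := s / 2) (by simp [hx])
  convert! hsq using 0
  simp_rw [← Real.rpow_natCast_mul (norm_nonneg _), ← Nat.cast_smul_eq_nsmul ℝ, smul_smul]
  ring_nf

lemma contDiff_norm_rpow_smul {k : WithTop ℕ∞} (hu : ContDiff ℝ k u) (h0 : (0 : E) ∉ tsupport u)
    (s : ℝ) : ContDiff ℝ k fun y => ‖y‖ ^ s • u y := by
  refine contDiff_iff_contDiffAt.2 fun x => ?_
  rcases eq_or_ne x 0 with rfl | hx
  · exact contDiffAt_const.congr_of_eventuallyEq (norm_rpow_smul_eventuallyEq_zero h0 s)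
  · exact ((contDiffAt_norm ℝ hx).rpow_const_of_ne (norm_ne_zero_iff.2 hx)).smul hu.contDiffAt

lemma hasFDerivAt_norm_rpow_smul {x : E} (hu : DifferentiableAt ℝ u x) (hx : x ≠ 0) (s : ℝ) :
    HasFDerivAt (fun y => ‖y‖ ^ s • u y)
      (‖x‖ ^ s • fderiv ℝ u x + ((s * ‖x‖ ^ (s - 2)) • innerSL ℝ x).smulRight (u x)) x :=
  (hasFDerivAt_norm_rpow_of_ne_zero hx s).smul hu.hasFDerivAt

lemma fderiv_norm_rpow_smul_apply_self {x : E} (hu : DifferentiableAt ℝ u x) (hu0 : u 0 = 0)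
    (s : ℝ) :
    fderiv ℝ (fun y => ‖y‖ ^ s • u y) x x = s • ‖x‖ ^ s • u x + ‖x‖ ^ s • fderiv ℝ u x x := by
  rcases eq_or_ne x 0 with rfl | hx
  · simp [hu0]
  · have hpow : ‖x‖ ^ (s - 2) * ‖x‖ ^ 2 = ‖x‖ ^ s := by
      rw [← Real.rpow_add_natCast (norm_ne_zero_iff.2 hx)]
      simp
    simp [(hasFDerivAt_norm_rpow_smul hu hx s).fderiv, smul_smul, mul_assoc, hpow, add_comm]

lemma norm_fderiv_norm_rpow_smul_le {x : E} (hu : DifferentiableAt ℝ u x)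
    (h0 : (0 : E) ∉ tsupport u) (s : ℝ) :
    ‖fderiv ℝ (fun y => ‖y‖ ^ s • u y) x‖ ≤
      ‖‖x‖ ^ s • fderiv ℝ u x‖ + |s| * ‖‖x‖ ^ (s - 1) • u x‖ := by
  rcases eq_or_ne x 0 with rfl | hx
  · rw [(norm_rpow_smul_eventuallyEq_zero h0 s).fderiv_eq]
    simp only [fderiv_fun_const, Pi.zero_apply, norm_zero]
    positivity
  · have hpow : ‖x‖ ^ (s - 2) * ‖x‖ = ‖x‖ ^ (s - 1) := by
      rw [← Real.rpow_add_one (norm_ne_zero_iff.2 hx)]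
      ring_nf
    rw [(hasFDerivAt_norm_rpow_smul hu hx s).fderiv]
    refine (norm_add_le _ _).trans_eq ?_
    simp [norm_smul, mul_assoc, ← hpow]

variable [MeasurableSpace E] [BorelSpace E] {μ : Measure E} [IsFiniteMeasureOnCompacts μ]

lemma integrable_norm_norm_rpow_smul_sq (hu : Continuous u) (hc : HasCompactSupport u)
    (h0 : (0 : E) ∉ tsupport u) (s : ℝ) : Integrable (fun x => ‖‖x‖ ^ s • u x‖ ^ 2) μ := by
  have hmem : MemLp (fun x => ‖x‖ ^ s • u x) (2 : ℕ) μ :=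
    (contDiff_norm_rpow_smul (contDiff_zero.2 hu) h0 s).continuous.memLp_of_hasCompactSupport
      hc.smul_left
  exact hmem.integrable_norm_pow two_ne_zero

lemma integrable_norm_norm_rpow_smul_fderiv_sq (hu : ContDiff ℝ 1 u)
    (hc : HasCompactSupport u) (h0 : (0 : E) ∉ tsupport u) (s : ℝ) :
    Integrable (fun x => ‖‖x‖ ^ s • fderiv ℝ u x‖ ^ 2) μ :=
  integrable_norm_norm_rpow_smul_sq (hu.continuous_fderiv one_ne_zero) (hc.fderiv (𝕜 := ℝ))
    (fun h => h0 (tsupport_fderiv_subset ℝ h)) s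

lemma integral_norm_fderiv_norm_rpow_smul_sq_le (hu : ContDiff ℝ 1 u) (hc : HasCompactSupport u)
    (h0 : (0 : E) ∉ tsupport u) (s : ℝ) :
    ∫ x, ‖fderiv ℝ (fun y => ‖y‖ ^ s • u y) x‖ ^ 2 ∂μ ≤
      2 * ∫ x, ‖‖x‖ ^ s • fderiv ℝ u x‖ ^ 2 ∂μ +
        2 * s ^ 2 * ∫ x, ‖‖x‖ ^ (s - 1) • u x‖ ^ 2 ∂μ := by
  have hgrad := (integrable_norm_norm_rpow_smul_fderiv_sq (μ := μ) hu hc h0 s).const_mul 2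
  have hfun := (integrable_norm_norm_rpow_smul_sq (μ := μ) hu.continuous hc h0 (s - 1)).const_mul
    (2 * s ^ 2)
  have hpoint x : ‖fderiv ℝ (fun y => ‖y‖ ^ s • u y) x‖ ^ 2 ≤
      2 * ‖‖x‖ ^ s • fderiv ℝ u x‖ ^ 2 + 2 * s ^ 2 * ‖‖x‖ ^ (s - 1) • u x‖ ^ 2 := by
    grw [norm_fderiv_norm_rpow_smul_le (hu.differentiable one_ne_zero x) h0, add_sq_le, mul_pow,
      sq_abs, mul_add, mul_assoc]
  rw [← integral_const_mul, ← integral_const_mul, ← integral_add hgrad hfun]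
  exact integral_mono_of_nonneg (.of_forall fun x => by positivity) (hgrad.add hfun)
    (.of_forall hpoint)

end NormRpowSMul

section WeightedInequalities

variable {E F : Type*} [NormedAddCommGroup E] [InnerProductSpace ℝ E] [FiniteDimensional ℝ E]
  [MeasurableSpace E] [BorelSpace E] {μ : Measure E} [μ.IsAddHaarMeasure]
  [NormedAddCommGroup F] [InnerProductSpace ℝ F] {u : E → F}

theorem weighted_hardy_inequality (hu : ContDiff ℝ 1 u) (hc : HasCompactSupport u)
    (h0 : (0 : E) ∉ tsupport u) (s : ℝ) :
    (s - 1 + finrank ℝ E / 2) ^ 2 * ∫ x, ‖‖x‖ ^ (s - 1) • u x‖ ^ 2 ∂μ ≤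
      ∫ x, ‖‖x‖ ^ s • fderiv ℝ u x‖ ^ 2 ∂μ := by
  have hradial x : ‖fderiv ℝ (fun y => ‖y‖ ^ (s - 1) • u y) x x - (s - 1) • ‖x‖ ^ (s - 1) • u x‖ ≤
      ‖‖x‖ ^ s • fderiv ℝ u x‖ := by
    rw [fderiv_norm_rpow_smul_apply_self (hu.differentiable one_ne_zero x)
      (image_eq_zero_of_notMem_tsupport h0), add_sub_cancel_left]
    exact norm_rpow_sub_one_smul_clm_apply_self_le _ x s
  refine (sq_mul_integral_norm_sq_le_integral_norm_fderiv_apply_self_sub_sq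
    (contDiff_norm_rpow_smul hu h0 (s - 1)) hc.smul_left (s - 1)).trans ?_
  refine integral_mono_of_nonneg (.of_forall fun x => by positivity)
    (integrable_norm_norm_rpow_smul_fderiv_sq hu hc h0 s) (.of_forall fun x => ?_)
  dsimp only
  gcongr
  exact hradial x

theorem gradient_weighted_inequality_general (hu : ContDiff ℝ 1 u) (hc : HasCompactSupport u)
    (h0 : (0 : E) ∉ tsupport u) {lam : ℝ} (hlam : lam ≠ finrank ℝ E / 2) :
    ∫ x, ‖fderiv ℝ (fun y => if y = 0 then 0 else (‖y‖ ^ (lam - 1))⁻¹ • u y) x‖ ^ 2 ∂μ ≤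
      (2 + 2 * ((lam - 1) / (lam - finrank ℝ E / 2)) ^ 2) *
        ∫ x, ‖fderiv ℝ u x‖ ^ 2 / ‖x‖ ^ (2 * lam - 2) ∂μ := by
  rw [ite_inv_norm_rpow_smul_eq (image_eq_zero_of_notMem_tsupport h0)]
  simp_rw [norm_sq_div_rpow_eq_norm_rpow_smul_sq (norm_nonneg _)]
  set I := ∫ x, ‖‖x‖ ^ (1 - lam - 1) • u x‖ ^ 2 ∂μ
  set J := ∫ x, ‖‖x‖ ^ (1 - lam) • fderiv ℝ u x‖ ^ 2 ∂μ
  have hhardy : (lam - finrank ℝ E / 2) ^ 2 * I ≤ J := by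
    convert weighted_hardy_inequality (μ := μ) hu hc h0 (1 - lam) using 2
    ring
  have habsorb : (1 - lam) ^ 2 * I ≤ ((lam - 1) / (lam - finrank ℝ E / 2)) ^ 2 * J := by
    rw [div_pow, div_mul_eq_mul_div, le_div_iff₀ (sq_pos_of_ne_zero (sub_ne_zero.2 hlam))]
    calc
      (1 - lam) ^ 2 * I * (lam - finrank ℝ E / 2) ^ 2 =
          (lam - 1) ^ 2 * ((lam - finrank ℝ E / 2) ^ 2 * I) := by ring
      _ ≤ (lam - 1) ^ 2 * J := by gcongr
  linarith [integral_norm_fderiv_norm_rpow_smul_sq_le (μ := μ) hu hc h0 (1 - lam)]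

end WeightedInequalities

/-- Lemma 2.2: there exist `C₀ > 0` and a threshold `λ₀ > n/2` such that for all
`λ ≥ λ₀` and all `u ∈ C_c^∞(ℝⁿ)` supported away from the origin,
`∫ |∇(u/|x|^{λ-1})|² ≤ C₀ ∫ |∇u|²/|x|^{2λ-2}`. -/
theorem gradient_weighted_inequality (n : ℕ) (hn : 1 ≤ n) :
    ∃ C₀ : ℝ, 0 < C₀ ∧ ∃ lam₀ : ℝ, (n : ℝ) / 2 < lam₀ ∧
      ∀ lam : ℝ, lam₀ ≤ lam →
        ∀ u : EuclideanSpace ℝ (Fin n) → ℝ,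
          ContDiff ℝ (⊤ : ℕ∞) u → HasCompactSupport u →
          (0 : EuclideanSpace ℝ (Fin n)) ∉ tsupport u →
          ∫ x : EuclideanSpace ℝ (Fin n),
              ‖fderiv ℝ (fun y : EuclideanSpace ℝ (Fin n) =>
                if y = (0 : EuclideanSpace ℝ (Fin n)) then 0 else u y / ‖y‖ ^ (lam - 1)) x‖ ^ 2 ≤
            C₀ * ∫ x : EuclideanSpace ℝ (Fin n), ‖fderiv ℝ u x‖ ^ 2 / ‖x‖ ^ (2 * lam - 2) := by
  have hn' : (1 : ℝ) ≤ n := by exact_mod_cast hn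
  refine ⟨10, by norm_num, n, by linarith, fun lam hlam u hu hc h0 => ?_⟩
  have hquot_nonneg : 0 ≤ (lam - 1) / (lam - n / 2) := div_nonneg (by linarith) (by linarith)
  have hquot_le : (lam - 1) / (lam - n / 2) ≤ 2 := (div_le_iff₀ (by linarith)).2 (by linarith)
  have hconst : 2 + 2 * ((lam - 1) / (lam - n / 2)) ^ 2 ≤ 10 := by
    grw [hquot_le]
    norm_num
  have hgen := gradient_weighted_inequality_general (μ := volume) (lam := lam)
    (hu.of_le (by exact_mod_cast le_top)) hc h0 (by rw [finrank_euclideanSpace_fin]; linarith)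
  simp only [finrank_euclideanSpace_fin, smul_eq_mul, inv_mul_eq_div] at hgen
  exact hgen.trans (by gcongr)
end

section
/- Let n ≥ 1, let Ω be a nonempty open connected subset of ℝⁿ, and let u : Ω → ℝ be locally Lipschitz on Ω. Let V : Ω → ℝ be a nonnegative measurable function such that x ↦ V(x)ⁿ is integrable on every compact subset of Ω. Assume that for almost every x ∈ Ω at which u is differentiable, ‖fderiv u x‖ ≤ V(x)·|u(x)|. If u(x₀) = 0 for some x₀ ∈ Ω, then u is identically 0 on Ω. -/
open MeasureTheory

/-!
It suffices to show that `u` vanishes near each of its zeros `x₀`, as the zero set of `u` is then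
relatively clopen. In polar coordinates around `x₀`, the restriction `w s = u (x₀ + s • θ)` to
almost every ray is Lipschitz with `‖w'‖ ≤ v ‖w‖` almost everywhere, where `v s = V (x₀ + s • θ)`
and `s ^ (n - 1) * v s ^ n` is integrable, `n` being the dimension. Young's inequality for `s * v s`
gives `v s ≤ 1 / (2 s) + h s` with `h` integrable up to `0`. By Grönwall's inequality `w` then
vanishes at `0` at most as fast as `s ^ (1 / 2)`, unless it vanishes identically, whereas Lipschitz
continuity forces `w s = O(s)`. So `u` is zero on almost every ray near `x₀`, and on all of them by
continuity.
-/

open Asymptotics Filter Metric Set Topology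

theorem eqOn_const_of_isPreconnected {X Y : Type*} [TopologicalSpace X] [TopologicalSpace Y]
    [T1Space Y] {f : X → Y} {U : Set X} (hU : IsPreconnected U) (hf : ContinuousOn f U) {c : Y}
    (hfc : ∀ x ∈ U, f x = c → ∀ᶠ y in 𝓝[U] x, f y = c) {x₀ : X} (hx₀ : x₀ ∈ U)
    (hfx₀ : f x₀ = c) : EqOn f (fun _ => c) U := by
  have : PreconnectedSpace U := isPreconnected_iff_preconnectedSpace.1 hU
  have hclosed : IsClosed {x : U | f x = c} :=
    isClosed_singleton.preimage (continuousOn_iff_continuous_domRestrict.1 hf)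
  have hopen : IsOpen {x : U | f x = c} := isOpen_iff_eventually.2 fun x hx => by
    have := hfc x x.2 hx
    rwa [← map_nhds_subtype_val] at this
  have huniv := IsClopen.eq_univ ⟨hclosed, hopen⟩ ⟨⟨x₀, hx₀⟩, hfx₀⟩
  exact fun x hx => eq_univ_iff_forall.1 huniv ⟨x, hx⟩

section AbsolutelyContinuous

theorem absolutelyContinuousOnInterval_comp_of_locallyLipschitz {X Y : Type*}
    [SeminormedAddCommGroup X] [PseudoMetricSpace Y] {φ : X → Y} {f : ℝ → X} {a b : ℝ}
    (hφ : LocallyLipschitz φ) (hf : AbsolutelyContinuousOnInterval f a b) :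
    AbsolutelyContinuousOnInterval (fun t => φ (f t)) a b := by
  obtain ⟨K, hK⟩ := hφ.locallyLipschitzOn.exists_lipschitzOnWith_of_compact
    (isCompact_uIcc.image_of_continuousOn hf.continuousOn)
  rw [absolutelyContinuousOnInterval_iff] at hf ⊢
  intro ε hε
  obtain ⟨δ, hδ, hfδ⟩ := hf (ε / (K + 1)) (by positivity)
  refine ⟨δ, hδ, fun I hI hIδ => ?_⟩
  calc ∑ i ∈ Finset.range I.1, dist (φ (f (I.2 i).1)) (φ (f (I.2 i).2))
      ≤ ∑ i ∈ Finset.range I.1, K * dist (f (I.2 i).1) (f (I.2 i).2) :=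
        Finset.sum_le_sum fun i hi =>
          hK.dist_le_mul _ (mem_image_of_mem f (hI.1 i hi).1) _ (mem_image_of_mem f (hI.1 i hi).2)
    _ = K * ∑ i ∈ Finset.range I.1, dist (f (I.2 i).1) (f (I.2 i).2) := (Finset.mul_sum ..).symm
    _ ≤ K * (ε / (K + 1)) := by gcongr; exact (hfδ I hI hIδ).le
    _ < ε := by rw [← mul_div_assoc, div_lt_iff₀ (by positivity)]; linarith

theorem le_of_ae_deriv_nonpos {f : ℝ → ℝ} {a b : ℝ} (hab : a ≤ b)
    (hf : AbsolutelyContinuousOnInterval f a b)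
    (hf' : ∀ᵐ t, t ∈ Ioc a b → deriv f t ≤ 0) : f b ≤ f a := by
  have hint : ∫ t in a..b, deriv f t ≤ 0 := by
    rw [intervalIntegral.integral_of_le hab]
    exact setIntegral_nonpos_of_ae_restrict ((ae_restrict_iff' measurableSet_Ioc).2 hf')
  linarith [hf.integral_deriv_eq_sub]

variable {F : Type*} [NormedAddCommGroup F] [NormedSpace ℝ F]

theorem deriv_norm_comp_le {w : ℝ → F} {t : ℝ} (hw : DifferentiableAt ℝ w t)
    (hnw : DifferentiableAt ℝ (fun s => ‖w s‖) t) :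
    deriv (fun s => ‖w s‖) t ≤ ‖deriv w t‖ := by
  refine le_of_tendsto_of_tendsto' hnw.hasDerivAt.tendsto_slope hw.hasDerivAt.tendsto_slope.norm
    fun s => (Real.le_norm_self _).trans ?_
  simp only [slope_def_module, norm_smul]
  gcongr
  exact abs_norm_sub_norm_le _ _

/-- Multiplied by the integrating factor `exp (-∫ h)`, `f` is nonincreasing, whatever its sign. -/
theorem le_mul_exp_integral_of_ae_deriv_le {f h : ℝ → ℝ} {a b : ℝ} (hab : a ≤ b)
    (hf : AbsolutelyContinuousOnInterval f a b) (hh : IntervalIntegrable h volume a b)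
    (hfh : ∀ᵐ t, t ∈ Ioc a b → deriv f t ≤ h t * f t) :
    f b ≤ f a * Real.exp (∫ t in a..b, h t) := by
  set H : ℝ → ℝ := fun t => ∫ τ in a..t, h τ
  have hH : AbsolutelyContinuousOnInterval H a b :=
    hh.absolutelyContinuousOnInterval_intervalIntegral left_mem_uIcc
  have hexp : AbsolutelyContinuousOnInterval (fun t => Real.exp (-H t)) a b :=
    absolutelyContinuousOnInterval_comp_of_locallyLipschitz
      Real.contDiff_exp.locallyLipschitz hH.neg
  have hfe : f b * Real.exp (-H b) ≤ f a * Real.exp (-H a) := by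
    refine le_of_ae_deriv_nonpos hab (hf.mul hexp) ?_
    filter_upwards [hf.ae_differentiableAt, hh.ae_hasDerivAt_integral, hfh] with t hft hHt hle ht
    have htab : t ∈ uIcc a b := Ioc_subset_Icc_self.trans Icc_subset_uIcc ht
    have hHt' : HasDerivAt H (h t) t := hHt htab a left_mem_uIcc
    calc deriv (f * fun t => Real.exp (-H t)) t
        = deriv f t * Real.exp (-H t) + f t * (Real.exp (-H t) * -h t) :=
          ((hft htab).hasDerivAt.mul hHt'.fun_neg.exp).deriv
      _ = (deriv f t - h t * f t) * Real.exp (-H t) := by ring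
      _ ≤ 0 := mul_nonpos_of_nonpos_of_nonneg (sub_nonpos.2 (hle ht)) (Real.exp_pos _).le
  have hHa : H a = 0 := intervalIntegral.integral_same
  rwa [hHa, neg_zero, Real.exp_zero, mul_one, Real.exp_neg, ← div_eq_mul_inv,
    div_le_iff₀ (Real.exp_pos _)] at hfe

theorem norm_le_mul_exp_integral_of_ae_norm_deriv_le {w : ℝ → F} {h : ℝ → ℝ} {a b : ℝ}
    (hab : a ≤ b) (hw : AbsolutelyContinuousOnInterval w a b)
    (hh : IntervalIntegrable h volume a b)
    (hwh : ∀ᵐ t, t ∈ Ioc a b → DifferentiableAt ℝ w t ∧ ‖deriv w t‖ ≤ h t * ‖w t‖) :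
    ‖w b‖ ≤ ‖w a‖ * Real.exp (∫ t in a..b, h t) := by
  have hnw : AbsolutelyContinuousOnInterval (fun t => ‖w t‖) a b :=
    absolutelyContinuousOnInterval_comp_of_locallyLipschitz
      lipschitzWith_one_norm.locallyLipschitz hw
  refine le_mul_exp_integral_of_ae_deriv_le hab hnw hh ?_
  filter_upwards [hnw.ae_differentiableAt, hwh] with t hnt ht htab
  obtain ⟨hwt, hle⟩ := ht htab
  exact (deriv_norm_comp_le hwt (hnt (Ioc_subset_Icc_self.trans Icc_subset_uIcc htab))).trans hle

end AbsolutelyContinuous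

section Ray

variable {F : Type*} [NormedAddCommGroup F] [NormedSpace ℝ F] {w : ℝ → F} {r : ℝ}

theorem norm_le_mul_rpow_of_ae_norm_deriv_le {h : ℝ → ℝ} {a s : ℝ} (hs : 0 < s) (hsr : s ≤ r)
    (hw : AbsolutelyContinuousOnInterval w s r) (hh : IntegrableOn h (Ioc 0 r))
    (hwh : ∀ᵐ t, t ∈ Ioc s r → DifferentiableAt ℝ w t ∧ ‖deriv w t‖ ≤ (a * t⁻¹ + h t) * ‖w t‖) :
    ‖w r‖ ≤ ‖w s‖ * ((r / s) ^ a * Real.exp (∫ t in Ioc 0 r, ‖h t‖)) := by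
  have hr : 0 < r := hs.trans_le hsr
  have hsub : Ioc s r ⊆ Ioc 0 r := Ioc_subset_Ioc_left hs.le
  have hinv : IntervalIntegrable (fun t => a * t⁻¹) volume s r :=
    (intervalIntegral.intervalIntegrable_inv
      (fun t ht => ((lt_min hs hr).trans_le ht.1).ne') continuousOn_id).const_mul a
  have hh' : IntervalIntegrable h volume s r :=
    (intervalIntegrable_iff_integrableOn_Ioc_of_le hsr).2 (hh.mono_set hsub)
  have hhle : ∫ t in s..r, h t ≤ ∫ t in Ioc 0 r, ‖h t‖ := by
    rw [intervalIntegral.integral_of_le hsr]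
    calc ∫ t in Ioc s r, h t ≤ ∫ t in Ioc s r, ‖h t‖ :=
          (Real.le_norm_self _).trans (norm_integral_le_integral_norm _)
      _ ≤ ∫ t in Ioc 0 r, ‖h t‖ :=
          setIntegral_mono_set hh.norm (.of_forall fun t => norm_nonneg _) hsub.eventuallyLE
  have hint : ∫ t in s..r, (a * t⁻¹ + h t) ≤ Real.log (r / s) * a + ∫ t in Ioc 0 r, ‖h t‖ := by
    rw [intervalIntegral.integral_add hinv hh', intervalIntegral.integral_const_mul,
      integral_inv_of_pos hs hr, mul_comm]
    gcongr
  calc ‖w r‖ ≤ ‖w s‖ * Real.exp (∫ t in s..r, (a * t⁻¹ + h t)) :=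
        norm_le_mul_exp_integral_of_ae_norm_deriv_le hsr hw (hinv.add hh') hwh
    _ ≤ ‖w s‖ * Real.exp (Real.log (r / s) * a + ∫ t in Ioc 0 r, ‖h t‖) := by gcongr
    _ = _ := by rw [Real.exp_add, Real.rpow_def_of_pos (div_pos hr hs)]

theorem eq_zero_of_ae_norm_deriv_le_of_isBigO_rpow {h : ℝ → ℝ} {a b : ℝ} (hab : a < b)
    (hr : 0 < r) (hw : ∀ s ∈ Ioo 0 r, AbsolutelyContinuousOnInterval w s r)
    (hw0 : w =O[𝓝[>] 0] fun s => s ^ b) (hh : IntegrableOn h (Ioc 0 r))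
    (hwh : ∀ᵐ t, t ∈ Ioc 0 r → DifferentiableAt ℝ w t ∧ ‖deriv w t‖ ≤ (a * t⁻¹ + h t) * ‖w t‖) :
    w r = 0 := by
  obtain ⟨C, hC⟩ := hw0.bound
  set M := Real.exp (∫ t in Ioc 0 r, ‖h t‖)
  have hle : ∀ᶠ s in 𝓝[>] 0, ‖w r‖ ≤ C * r ^ a * M * s ^ (b - a) := by
    filter_upwards [hC, Ioo_mem_nhdsGT hr] with s hCs hs
    calc ‖w r‖ ≤ ‖w s‖ * ((r / s) ^ a * M) :=
          norm_le_mul_rpow_of_ae_norm_deriv_le hs.1 hs.2.le (hw s hs) hh <|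
            hwh.mono fun t ht hts => ht (Ioc_subset_Ioc_left hs.1.le hts)
      _ ≤ C * ‖s ^ b‖ * ((r / s) ^ a * M) := by
          have := (div_pos hr hs.1).le
          gcongr
      _ = C * r ^ a * M * s ^ (b - a) := by
          rw [Real.norm_of_nonneg (Real.rpow_nonneg hs.1.le b), Real.div_rpow hr.le hs.1.le,
            Real.rpow_sub hs.1]
          ring
  have hlim : Tendsto (fun s : ℝ => C * r ^ a * M * s ^ (b - a)) (𝓝[>] 0) (𝓝 0) := by
    have := (Real.continuousAt_rpow_const 0 (b - a) (.inr (sub_pos.2 hab).le)).tendsto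
    rw [Real.zero_rpow (sub_pos.2 hab).ne'] at this
    simpa using (this.mono_left nhdsWithin_le_nhds).const_mul (C * r ^ a * M)
  exact norm_le_zero_iff.1 (ge_of_tendsto hlim hle)

theorem le_add_abs_pow_div_pow {n : ℕ} (hn : n ≠ 0) {c : ℝ} (hc : 0 < c) (t : ℝ) :
    t ≤ c + |t| ^ n / c ^ (n - 1) := by
  rcases le_total |t| c with htc | hct
  · exact (le_abs_self t).trans (htc.trans (le_add_of_nonneg_right (by positivity)))
  · have hpow : |t| ≤ |t| ^ n / c ^ (n - 1) := by
      rw [le_div_iff₀ (by positivity), ← mul_pow_sub_one hn |t|]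
      gcongr
    linarith [le_abs_self t]

theorem eq_zero_of_ae_norm_deriv_le_of_isBigO_self {n : ℕ} (hn : n ≠ 0) {v : ℝ → ℝ} (hr : 0 < r)
    (hw : ∀ s ∈ Ioo 0 r, AbsolutelyContinuousOnInterval w s r)
    (hw0 : w =O[𝓝[>] 0] (fun s : ℝ => s))
    (hv : IntegrableOn (fun s => s ^ (n - 1) * v s ^ n) (Ioc 0 r))
    (hwv : ∀ᵐ s, s ∈ Ioc 0 r → DifferentiableAt ℝ w s ∧ ‖deriv w s‖ ≤ v s * ‖w s‖) :
    w r = 0 := by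
  have hv_le : ∀ s, 0 < s →
      v s ≤ 1 / 2 * s⁻¹ + ‖s ^ (n - 1) * v s ^ n‖ / (1 / 2) ^ (n - 1) := fun s hs => by
    have hyoung := le_add_abs_pow_div_pow hn one_half_pos (s * v s)
    have hpow : |s * v s| ^ n = s * ‖s ^ (n - 1) * v s ^ n‖ := by
      rw [← abs_pow, mul_pow, ← mul_pow_sub_one hn s, mul_assoc, abs_mul, abs_of_pos hs,
        Real.norm_eq_abs]
    rw [hpow] at hyoung
    refine le_of_mul_le_mul_left (hyoung.trans_eq ?_) hs
    field_simp
  refine eq_zero_of_ae_norm_deriv_le_of_isBigO_rpow one_half_lt_one hr hw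
    (by simpa only [Real.rpow_one] using hw0) (hv.norm.div_const ((1 / 2) ^ (n - 1))) ?_
  filter_upwards [hwv] with s hs hsr
  obtain ⟨hd, hle⟩ := hs hsr
  exact ⟨hd, hle.trans (by gcongr; exact hv_le s hsr.1)⟩

end Ray

section Polar

open Module

theorem ae_volumeIoiPow_iff {n : ℕ} {p : ℝ → Prop} :
    (∀ᵐ r : Ioi (0 : ℝ) ∂Measure.volumeIoiPow n, p r) ↔ ∀ᵐ r : ℝ, 0 < r → p r := by
  rw [Measure.volumeIoiPow, ae_withDensity_iff (by fun_prop)]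
  have hne (r : Ioi (0 : ℝ)) : ENNReal.ofReal ((r : ℝ) ^ n) ≠ 0 :=
    (ENNReal.ofReal_pos.2 (pow_pos r.2 n)).ne'
  simp only [hne, ne_eq, not_false_eq_true, forall_const]
  rw [← ae_restrict_iff_subtype measurableSet_Ioi, ae_restrict_iff' measurableSet_Ioi]
  rfl

variable {F : Type*} [NormedAddCommGroup F] [NormedSpace ℝ F]

theorem integrable_volumeIoiPow_iff {n : ℕ} {g : ℝ → F} :
    Integrable (fun r : Ioi (0 : ℝ) => g r) (.volumeIoiPow n) ↔
      IntegrableOn (fun r => r ^ n • g r) (Ioi 0) := by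
  rw [Measure.volumeIoiPow, integrable_withDensity_iff_integrable_smul' (by fun_prop) (by simp),
    integrableOn_iff_comap_subtypeVal measurableSet_Ioi]
  refine integrable_congr (.of_forall fun r => ?_)
  simp only [Function.comp_apply, ENNReal.toReal_ofReal (pow_nonneg (le_of_lt r.2) n)]

variable {E : Type*} [NormedAddCommGroup E] [NormedSpace ℝ E] [FiniteDimensional ℝ E]
  [MeasurableSpace E] [BorelSpace E] {μ : Measure E} [μ.IsAddHaarMeasure] [Nontrivial E]

theorem measurePreserving_add_smul_sphere (x₀ : E) :
    MeasurePreserving (fun p : sphere (0 : E) 1 × Ioi (0 : ℝ) => x₀ + (p.2 : ℝ) • (p.1 : E))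
      (μ.toSphere.prod (.volumeIoiPow (finrank ℝ E - 1))) μ := by
  have hpolar := μ.measurePreserving_homeomorphUnitSphereProd.symm
    (homeomorphUnitSphereProd E).toMeasurableEquiv
  have hcoe := measurePreserving_subtype_coe (μa := μ) (measurableSet_singleton (0 : E)).compl
  rw [restrict_compl_singleton] at hcoe
  exact (measurePreserving_add_left μ x₀).comp (hcoe.comp hpolar)

theorem ae_toSphere_ae_of_ae {p : E → Prop} (hp : ∀ᵐ x ∂μ, p x) (x₀ : E) :
    ∀ᵐ θ : sphere (0 : E) 1 ∂μ.toSphere, ∀ᵐ r : ℝ, 0 < r → p (x₀ + r • (θ : E)) := by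
  filter_upwards [Measure.ae_ae_of_ae_prod
    ((measurePreserving_add_smul_sphere x₀).quasiMeasurePreserving.ae hp)] with θ hθ
  exact ae_volumeIoiPow_iff.1 hθ

theorem ae_toSphere_integrableOn_of_integrable {g : E → F} (hg : Integrable g μ) (x₀ : E) :
    ∀ᵐ θ : sphere (0 : E) 1 ∂μ.toSphere,
      IntegrableOn (fun r : ℝ => r ^ (finrank ℝ E - 1) • g (x₀ + r • (θ : E))) (Ioi 0) := by
  have hpolar := (measurePreserving_add_smul_sphere x₀).integrable_comp_of_integrable hg
  filter_upwards [hpolar.prod_right_ae] with θ hθ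
  exact integrable_volumeIoiPow_iff.1 hθ

end Polar

section UniqueContinuation

open Module

variable {E F : Type*} [NormedAddCommGroup E] [NormedSpace ℝ E] [NormedAddCommGroup F]
  {u : E → F} {V : E → ℝ} {x₀ : E} {R : ℝ}

theorem add_smul_mem_ball {θ : E} (hθ : ‖θ‖ = 1) {s : ℝ} (hs : s ∈ Ico 0 R) :
    x₀ + s • θ ∈ ball x₀ R := by
  rw [mem_ball_iff_norm, add_sub_cancel_left, norm_smul, hθ, mul_one, Real.norm_of_nonneg hs.1]
  exact hs.2

theorem lipschitzOnWith_comp_add_smul {K : NNReal} (hu : LipschitzOnWith K u (ball x₀ R)) {θ : E}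
    (hθ : ‖θ‖ = 1) : LipschitzOnWith K (fun s : ℝ => u (x₀ + s • θ)) (Ico 0 R) := by
  refine .of_dist_le_mul fun s hs t ht => ?_
  refine (hu.dist_le_mul _ (add_smul_mem_ball hθ hs) _ (add_smul_mem_ball hθ ht)).trans_eq ?_
  rw [dist_add_left, dist_eq_norm, ← sub_smul, norm_smul, hθ, mul_one, dist_eq_norm]

theorem isBigO_self_of_lipschitzOnWith {w : ℝ → F} {K : NNReal} (hR : 0 < R)
    (hw : LipschitzOnWith K w (Ico 0 R)) (hw0 : w 0 = 0) : w =O[𝓝[>] 0] (fun s : ℝ => s) := by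
  refine .of_bound K ?_
  filter_upwards [Ioo_mem_nhdsGT hR] with s hs
  simpa only [hw0, dist_zero_right] using
    hw.dist_le_mul s (Ioo_subset_Ico_self hs) 0 (left_mem_Ico.2 hR)

theorem eqOn_const_ball_of_ae_ray_eq [FiniteDimensional ℝ E] [MeasurableSpace E] [BorelSpace E]
    {μ : Measure E} [μ.IsAddHaarMeasure] [Nontrivial E] (hu : ContinuousOn u (ball x₀ R)) {c : F}
    (hx₀ : u x₀ = c)
    (hray : ∀ᵐ θ : sphere (0 : E) 1 ∂μ.toSphere, ∀ r ∈ Ioo 0 R, u (x₀ + r • (θ : E)) = c) :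
    EqOn u (fun _ => c) (ball x₀ R) := by
  intro x hx
  rcases eq_or_ne x x₀ with rfl | hne
  · exact hx₀
  have hpos : 0 < ‖x - x₀‖ := norm_sub_pos_iff.2 hne
  have hlt : ‖x - x₀‖ < R := mem_ball_iff_norm.1 hx
  have hcont : Continuous fun θ : sphere (0 : E) 1 => u (x₀ + ‖x - x₀‖ • (θ : E)) :=
    hu.comp_continuous (by fun_prop) fun θ =>
      add_smul_mem_ball (norm_eq_of_mem_sphere θ) ⟨hpos.le, hlt⟩
  have hconst := hcont.ext_on (Measure.dense_of_ae hray) continuous_const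
    fun θ hθ => hθ _ ⟨hpos, hlt⟩
  have hx' := congrFun hconst ⟨‖x - x₀‖⁻¹ • (x - x₀), by
    rw [mem_sphere_zero_iff_norm, norm_smul, norm_inv, norm_norm, inv_mul_cancel₀ hpos.ne']⟩
  rwa [smul_inv_smul₀ hpos.ne', add_sub_cancel] at hx'

variable [NormedSpace ℝ F]

theorem hasDerivAt_comp_add_smul {θ : E} {s : ℝ} (hu : DifferentiableAt ℝ u (x₀ + s • θ)) :
    HasDerivAt (fun s : ℝ => u (x₀ + s • θ)) (fderiv ℝ u (x₀ + s • θ) θ) s := by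
  have hline : HasDerivAt (fun s : ℝ => x₀ + s • θ) θ s := by
    simpa only [id_eq, one_smul] using ((hasDerivAt_id s).smul_const θ).const_add x₀
  exact hu.hasFDerivAt.comp_hasDerivAt s hline

variable [FiniteDimensional ℝ E] [MeasurableSpace E] [BorelSpace E] {μ : Measure E}
  [μ.IsAddHaarMeasure]

theorem ae_ray_eq_zero_of_ae_norm_fderiv_le [Nontrivial E] {K : NNReal}
    (hu : LipschitzOnWith K u (ball x₀ R)) (hux₀ : u x₀ = 0)
    (hV : IntegrableOn (fun x => V x ^ finrank ℝ E) (ball x₀ R) μ)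
    (huV : ∀ᵐ x ∂μ, x ∈ ball x₀ R → DifferentiableAt ℝ u x ∧ ‖fderiv ℝ u x‖ ≤ V x * ‖u x‖) :
    ∀ᵐ θ : sphere (0 : E) 1 ∂μ.toSphere, ∀ r ∈ Ioo 0 R, u (x₀ + r • (θ : E)) = 0 := by
  filter_upwards [ae_toSphere_ae_of_ae huV x₀, ae_toSphere_integrableOn_of_integrable
    ((integrable_indicator_iff measurableSet_ball).2 hV) x₀] with θ hθuV hθV r hr
  have hθ : ‖(θ : E)‖ = 1 := norm_eq_of_mem_sphere θ
  have hmem : ∀ s ∈ Ioc 0 r, x₀ + s • (θ : E) ∈ ball x₀ R := fun s hs =>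
    add_smul_mem_ball hθ ⟨hs.1.le, hs.2.trans_lt hr.2⟩
  have hlip := lipschitzOnWith_comp_add_smul hu hθ
  refine eq_zero_of_ae_norm_deriv_le_of_isBigO_self (w := fun s => u (x₀ + s • (θ : E)))
    (v := fun s => V (x₀ + s • (θ : E))) (n := finrank ℝ E) finrank_pos.ne' hr.1 ?_
    (isBigO_self_of_lipschitzOnWith (hr.1.trans hr.2) hlip (by rwa [zero_smul, add_zero])) ?_ ?_
  · intro s hs
    refine (hlip.mono ?_).absolutelyContinuousOnInterval
    rw [uIcc_of_le hs.2.le]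
    exact Icc_subset_Ico hs.1.le hr.2
  · refine (hθV.mono_set Ioc_subset_Ioi_self).congr_fun (fun s hs => ?_) measurableSet_Ioc
    simp only [indicator_of_mem (hmem s hs), smul_eq_mul]
  · filter_upwards [hθuV] with s hs hsr
    obtain ⟨hd, hle⟩ := hs hsr.1 (hmem s hsr)
    have hderiv := hasDerivAt_comp_add_smul hd
    refine ⟨hderiv.differentiableAt, hderiv.deriv ▸ le_trans ?_ hle⟩
    simpa only [hθ, mul_one] using (fderiv ℝ u (x₀ + s • (θ : E))).le_opNorm θ

variable [FiniteDimensional ℝ F] {Ω : Set E}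

theorem eventually_eq_zero_of_ae_norm_fderiv_le (hΩ : IsOpen Ω) (hu : LocallyLipschitzOn Ω u)
    (hV : LocallyIntegrableOn (fun x => V x ^ finrank ℝ E) Ω μ)
    (huV : ∀ᵐ x ∂μ, x ∈ Ω → DifferentiableAt ℝ u x → ‖fderiv ℝ u x‖ ≤ V x * ‖u x‖)
    (hx₀ : x₀ ∈ Ω) (hux₀ : u x₀ = 0) : ∀ᶠ x in 𝓝 x₀, u x = 0 := by
  rcases subsingleton_or_nontrivial E with _ | _
  · exact .of_forall fun x => Subsingleton.elim x₀ x ▸ hux₀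
  obtain ⟨K, s, hs, hus⟩ := hu hx₀
  obtain ⟨t, ht, hVt⟩ := hV x₀ hx₀
  rw [hΩ.nhdsWithin_eq hx₀] at hs ht
  obtain ⟨R, hR, hball⟩ := nhds_basis_ball.mem_iff.1
    (inter_mem (hΩ.mem_nhds hx₀) (inter_mem hs ht))
  obtain ⟨hRΩ, hRs, hRt⟩ : ball x₀ R ⊆ Ω ∧ ball x₀ R ⊆ s ∧ ball x₀ R ⊆ t := by
    simpa only [subset_inter_iff] using hball
  have huR := hus.mono hRs
  have huV' : ∀ᵐ x ∂μ, x ∈ ball x₀ R →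
      DifferentiableAt ℝ u x ∧ ‖fderiv ℝ u x‖ ≤ V x * ‖u x‖ := by
    filter_upwards [huV, huR.ae_differentiableWithinAt_of_mem (μ := μ)] with x hle hd hx
    have hdx := (hd hx).differentiableAt (isOpen_ball.mem_nhds hx)
    exact ⟨hdx, hle (hRΩ hx) hdx⟩
  filter_upwards [ball_mem_nhds x₀ hR] using eqOn_const_ball_of_ae_ray_eq huR.continuousOn hux₀
    (ae_ray_eq_zero_of_ae_norm_fderiv_le huR hux₀ (hVt.mono_set hRt) huV')

theorem unique_continuation_lipschitz_general (hΩ : IsOpen Ω) (hΩc : IsPreconnected Ω)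
    (hu : LocallyLipschitzOn Ω u) (hV : LocallyIntegrableOn (fun x => V x ^ finrank ℝ E) Ω μ)
    (huV : ∀ᵐ x ∂μ, x ∈ Ω → DifferentiableAt ℝ u x → ‖fderiv ℝ u x‖ ≤ V x * ‖u x‖)
    (hx₀ : x₀ ∈ Ω) (hux₀ : u x₀ = 0) : ∀ x ∈ Ω, u x = 0 :=
  eqOn_const_of_isPreconnected hΩc hu.continuousOn
    (fun _ hx hux => eventually_nhdsWithin_of_eventually_nhds
      (eventually_eq_zero_of_ae_norm_fderiv_le hΩ hu hV huV hx hux)) hx₀ hux₀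

end UniqueContinuation

/-- Theorem 1.3: if `u` is locally Lipschitz on a domain `Ω ⊆ ℝⁿ`, `V ≥ 0` is
measurable with `Vⁿ` locally integrable on `Ω`, `|∇u| ≤ V|u|` a.e. on `Ω`, and
`u(x₀) = 0` at some point `x₀ ∈ Ω`, then `u ≡ 0` on `Ω`. -/
theorem unique_continuation_lipschitz (n : ℕ) (hn : 1 ≤ n)
    (Ω : Set (EuclideanSpace ℝ (Fin n))) (hΩopen : IsOpen Ω) (hΩconn : IsConnected Ω)
    (u : EuclideanSpace ℝ (Fin n) → ℝ)
    (hLip : ∀ x ∈ Ω, ∃ (K : NNReal) (t : Set (EuclideanSpace ℝ (Fin n))),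
      t ∈ nhds x ∧ t ⊆ Ω ∧ LipschitzOnWith K u t)
    (V : EuclideanSpace ℝ (Fin n) → ℝ)
    (hVpos : ∀ x ∈ Ω, 0 ≤ V x) (hVmeas : Measurable V)
    (hVint : ∀ K : Set (EuclideanSpace ℝ (Fin n)), K ⊆ Ω → IsCompact K →
      IntegrableOn (fun x => V x ^ n) K volume)
    (hineq : ∀ᵐ x, x ∈ Ω → DifferentiableAt ℝ u x → ‖fderiv ℝ u x‖ ≤ V x * |u x|)
    (x₀ : EuclideanSpace ℝ (Fin n)) (hx₀ : x₀ ∈ Ω) (hux₀ : u x₀ = 0) :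
    ∀ x ∈ Ω, u x = 0 := by
  have hu : LocallyLipschitzOn Ω u := fun x hx =>
    let ⟨K, t, ht, _, hut⟩ := hLip x hx
    ⟨K, t, mem_nhdsWithin_of_mem_nhds ht, hut⟩
  have hV : LocallyIntegrableOn (fun x => V x ^ Module.finrank ℝ (EuclideanSpace ℝ (Fin n))) Ω := by
    rw [finrank_euclideanSpace_fin]
    exact (locallyIntegrableOn_iff hΩopen.isLocallyClosed).2 hVint
  exact unique_continuation_lipschitz_general hΩopen hΩconn.isPreconnected hu hV hineq hx₀ hux₀
end

section
/- Let n ≥ 2, let Ω be a nonempty open connected subset of ℝⁿ, and let u : Ω → ℝ be locally Lipschitz on Ω with zero set Z_u = {x ∈ Ω : u(x) = 0}, where Z_u is neither empty nor all of Ω. Then for every point a ∈ Ω lying on the topological frontier of Z_u and every open neighborhood U of a with U ⊆ Ω, the lower Lebesgue integral ∫_{U∖Z_u} (‖fderiv u x‖ / |u(x)|)ⁿ dv is infinite. -/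
/-!
Suppose the integral is finite and let `u` be `K`-Lipschitz on a small ball around `a`, where
`u a = 0`. In polar coordinates centered at `a`, for almost every direction `θ` the function
`φ t = u (a + t • θ)` satisfies `∫ t ^ (d - 1) * |φ' / φ| ^ d dt < ∞`, where `d` is the dimension
and the integrand is `0` at the zeros of `φ`.

Such a `φ` must vanish. If `φ r ≠ 0`, let `s < r` be the last zero of `φ` before `r`. The
inequality `x ≤ 1 / (2 t) + 2 ^ (d - 1) * t ^ (d - 1) * x ^ d` for `x = |φ' / φ|`, integrated over
`[s + δ, r]`, gives `log |φ r| - log |φ (s + δ)| ≤ (1 / 2) * log (r / δ) + C`. As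
`|φ (s + δ)| ≤ K * δ`, this bounds `log |φ r|` by `(1 / 2) * log δ + C'`, which tends to `-∞` as
`δ → 0`.

Hence `u = 0` on almost every ray near `a`, so by continuity on a whole ball around `a`, and `a` is
interior to the zero set rather than on its frontier.
-/

open MeasureTheory

open Filter Metric Module Set Topology
open scoped NNReal ENNReal

section Auxiliary

lemma nontrivial_of_mem_frontier {X : Type*} [TopologicalSpace X] {s : Set X} {x : X}
    (hx : x ∈ frontier s) : Nontrivial X := by
  by_contra h
  rw [not_nontrivial_iff_subsingleton] at h
  rcases s.eq_empty_or_nonempty with rfl | hs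
  · simp at hx
  · simp [Subsingleton.eq_univ_of_nonempty hs] at hx

lemma pow_le_one_add_rpow {x : ℝ} (hx : 0 ≤ x) {k : ℕ} {p : ℝ} (hkp : k ≤ p) :
    x ^ k ≤ 1 + x ^ p := by
  rcases le_total x 1 with h | h
  · exact (pow_le_one₀ hx h).trans (le_add_of_nonneg_right (Real.rpow_nonneg hx p))
  · rw [← Real.rpow_natCast]
    exact (Real.rpow_le_rpow_of_exponent_le h hkp).trans (le_add_of_nonneg_left zero_le_one)

variable {X : Type*} [MeasurableSpace X] {ν : Measure X}

lemma lintegral_ofReal_pow_ne_top_of_rpow [IsFiniteMeasure ν] {f : X → ℝ} (hf : ∀ x, 0 ≤ f x)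
    {k : ℕ} {p : ℝ} (hkp : k ≤ p) (hfin : ∫⁻ x, ENNReal.ofReal (f x ^ p) ∂ν ≠ ⊤) :
    ∫⁻ x, ENNReal.ofReal (f x ^ k) ∂ν ≠ ⊤ := by
  refine ne_top_of_le_ne_top (ENNReal.add_ne_top.2 ⟨measure_ne_top ν univ, hfin⟩) ?_
  calc ∫⁻ x, ENNReal.ofReal (f x ^ k) ∂ν ≤ ∫⁻ x, (1 + ENNReal.ofReal (f x ^ p)) ∂ν := by
        refine lintegral_mono fun x ↦ ?_
        rw [← ENNReal.ofReal_one, ← ENNReal.ofReal_add zero_le_one (Real.rpow_nonneg (hf x) p)]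
        exact ENNReal.ofReal_le_ofReal (pow_le_one_add_rpow (hf x) hkp)
    _ = ν univ + ∫⁻ x, ENNReal.ofReal (f x ^ p) ∂ν := by
        rw [lintegral_add_left measurable_const, lintegral_one]

lemma setLIntegral_le_setLIntegral_sdiff {f : X → ℝ≥0∞} {s t : Set X} (hs : MeasurableSet s)
    (hf : ∀ x ∈ s ∩ t, f x = 0) : ∫⁻ x in s, f x ∂ν ≤ ∫⁻ x in s \ t, f x ∂ν := by
  have hind : s.indicator f = (s \ t).indicator f := by
    ext x
    by_cases hxs : x ∈ s <;> by_cases hxt : x ∈ t <;> simp [hxs, hxt, hf]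
  rw [← lintegral_indicator hs, hind]
  exact lintegral_indicator_le f _

end Auxiliary

section LogDeriv

lemma lipschitzOnWith_log_Ici {m : ℝ≥0} (hm : 0 < m) :
    LipschitzOnWith m⁻¹ Real.log (Ici (m : ℝ)) := by
  have hpos : ∀ x ∈ Ici (m : ℝ), 0 < x := fun x hx ↦ (NNReal.coe_pos.2 hm).trans_le hx
  refine (convex_Ici _).lipschitzOnWith_of_nnnorm_deriv_le
    (fun x hx ↦ Real.differentiableAt_log (hpos x hx).ne') fun x hx ↦ ?_
  rw [Real.deriv_log, nnnorm_inv]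
  refine inv_anti₀ hm (NNReal.coe_le_coe.1 ?_)
  simpa [abs_of_pos (hpos x hx)] using hx

lemma exists_lipschitzOnWith_log_comp {X : Type*} [PseudoMetricSpace X] {K : ℝ≥0} {s : Set X}
    {φ : X → ℝ} (hs : IsCompact s) (hφ : LipschitzOnWith K φ s) (hne : ∀ x ∈ s, φ x ≠ 0) :
    ∃ C, LipschitzOnWith C (fun x ↦ Real.log (φ x)) s := by
  obtain ⟨m, hm, hle⟩ : ∃ m : ℝ, 0 < m ∧ ∀ x ∈ s, m ≤ |φ x| :=
    hs.exists_forall_le' hφ.continuousOn.abs fun x hx ↦ abs_pos.2 (hne x hx)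
  lift m to ℝ≥0 using hm.le
  have habs : LipschitzOnWith (1 * K) (fun x ↦ |φ x|) s :=
    lipschitzWith_one_norm.comp_lipschitzOnWith hφ
  refine ⟨m⁻¹ * (1 * K), ?_⟩
  simpa only [Function.comp_def, Real.log_abs] using (lipschitzOnWith_log_Ici hm).comp habs hle

lemma log_le_log_add_log_dist {X : Type*} [PseudoMetricSpace X] {K : ℝ≥0} {f : X → ℝ}
    (hf : LipschitzWith K f) {x y : X} (hx : f x = 0) (hy : f y ≠ 0) :
    Real.log (f y) ≤ Real.log K + Real.log (dist y x) := by
  have hle : |f y| ≤ K * dist y x := by simpa [hx] using hf.dist_le_mul y x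
  have hmul : 0 < K * dist y x := (abs_pos.2 hy).trans_le hle
  rw [← Real.log_abs,
    ← Real.log_mul (left_ne_zero_of_mul hmul.ne') (right_ne_zero_of_mul hmul.ne')]
  exact Real.log_le_log (abs_pos.2 hy) hle

variable {K : ℝ≥0} {φ : ℝ → ℝ} {a b : ℝ}

lemma ae_deriv_log_comp_eq_logDeriv (hφ : LipschitzOnWith K φ (uIcc a b))
    (hne : ∀ t ∈ uIcc a b, φ t ≠ 0) :
    ∀ᵐ t, t ∈ uIoc a b → deriv (fun t ↦ Real.log (φ t)) t = logDeriv φ t := by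
  filter_upwards [hφ.absolutelyContinuousOnInterval.ae_differentiableAt] with t hd ht
  have ht' := uIoc_subset_uIcc ht
  exact Real.deriv_log_comp_eq_logDeriv (hd ht') (hne t ht')

lemma intervalIntegrable_logDeriv (hφ : LipschitzOnWith K φ (uIcc a b))
    (hne : ∀ t ∈ uIcc a b, φ t ≠ 0) : IntervalIntegrable (logDeriv φ) volume a b := by
  obtain ⟨C, hC⟩ := exists_lipschitzOnWith_log_comp isCompact_uIcc hφ hne
  refine hC.absolutelyContinuousOnInterval.intervalIntegrable_deriv.congr_ae ?_
  exact (ae_restrict_iff' measurableSet_uIoc).2 (ae_deriv_log_comp_eq_logDeriv hφ hne)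

lemma integral_logDeriv_eq_log_sub_log (hφ : LipschitzOnWith K φ (uIcc a b))
    (hne : ∀ t ∈ uIcc a b, φ t ≠ 0) :
    ∫ t in a..b, logDeriv φ t = Real.log (φ b) - Real.log (φ a) := by
  obtain ⟨C, hC⟩ := exists_lipschitzOnWith_log_comp isCompact_uIcc hφ hne
  rw [← hC.absolutelyContinuousOnInterval.integral_deriv_eq_sub,
    intervalIntegral.integral_congr_ae (ae_deriv_log_comp_eq_logDeriv hφ hne)]

/-- Any coefficient of `t⁻¹` below `1` would serve as well as `2⁻¹`; the coefficient `1` would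
not. -/
lemma le_inv_add_mul_pow (k : ℕ) {t x : ℝ} (ht : 0 < t) (hx : 0 ≤ x) :
    x ≤ 2⁻¹ * t⁻¹ + 2 ^ k * (t ^ k * x ^ (k + 1)) := by
  have hinv : 0 ≤ 2⁻¹ * t⁻¹ := by positivity
  have hpow : 0 ≤ 2 ^ k * (t ^ k * x ^ (k + 1)) := by positivity
  rcases le_total (2 * (t * x)) 1 with h | h
  · have : x ≤ 2⁻¹ * t⁻¹ := by
      rw [← mul_inv, ← one_div, le_div_iff₀ (by positivity)]
      linarith
    linarith
  · calc x ≤ (2 * (t * x)) ^ k * x := le_mul_of_one_le_left hx (one_le_pow₀ h)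
      _ = 2 ^ k * (t ^ k * x ^ (k + 1)) := by ring
      _ ≤ _ := le_add_of_nonneg_left hinv

lemma log_sub_log_le_integral_logDeriv {c r : ℝ} (hc : 0 < c) (hcr : c ≤ r)
    (hφ : LipschitzOnWith K φ (Icc c r)) (hne : ∀ t ∈ Icc c r, φ t ≠ 0) {k : ℕ}
    (hint : IntervalIntegrable (fun t ↦ t ^ k * |logDeriv φ t| ^ (k + 1)) volume c r) :
    Real.log (φ r) - Real.log (φ c) ≤
      2⁻¹ * Real.log (r / c) + 2 ^ k * ∫ t in c..r, t ^ k * |logDeriv φ t| ^ (k + 1) := by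
  rw [← uIcc_of_le hcr] at hφ hne
  have hinv : IntervalIntegrable (fun t : ℝ ↦ t⁻¹) volume c r :=
    intervalIntegrable_inv_iff.2 <| .inr <| notMem_uIcc_of_lt hc (hc.trans_le hcr)
  calc Real.log (φ r) - Real.log (φ c) = ∫ t in c..r, logDeriv φ t :=
        (integral_logDeriv_eq_log_sub_log hφ hne).symm
    _ ≤ ∫ t in c..r, (2⁻¹ * t⁻¹ + 2 ^ k * (t ^ k * |logDeriv φ t| ^ (k + 1))) :=
        intervalIntegral.integral_mono_on hcr (intervalIntegrable_logDeriv hφ hne)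
          ((hinv.const_mul _).add (hint.const_mul _)) fun t ht ↦
            (le_abs_self _).trans (le_inv_add_mul_pow k (hc.trans_le ht.1) (abs_nonneg _))
    _ = _ := by
        rw [intervalIntegral.integral_add (hinv.const_mul _) (hint.const_mul _),
          intervalIntegral.integral_const_mul, intervalIntegral.integral_const_mul,
          integral_inv_of_pos hc (hc.trans_le hcr)]

lemma exists_last_zero (hab : a ≤ b) (hφ : ContinuousOn φ (Icc a b)) (ha : φ a = 0)
    (hb : φ b ≠ 0) : ∃ s ∈ Ico a b, φ s = 0 ∧ ∀ t ∈ Ioc s b, φ t ≠ 0 := by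
  have hcompact : IsCompact (Icc a b ∩ φ ⁻¹' {0}) :=
    isCompact_Icc.of_isClosed_subset (hφ.preimage_isClosed_of_isClosed isClosed_Icc
      isClosed_singleton) inter_subset_left
  obtain ⟨s, ⟨hs, hφs⟩, hmax⟩ := hcompact.exists_isGreatest ⟨a, left_mem_Icc.2 hab, ha⟩
  refine ⟨s, ⟨hs.1, hs.2.lt_of_ne ?_⟩, hφs, fun t ht hφt ↦ ?_⟩
  · rintro rfl
    exact hb hφs
  · exact ht.1.not_ge (hmax ⟨⟨hs.1.trans ht.1.le, ht.2⟩, hφt⟩)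

lemma integrableOn_pow_mul_abs_logDeriv_pow (hφ : Measurable φ) {k : ℕ} {R : ℝ}
    (hfin : ∫⁻ t in Ioo 0 R, ENNReal.ofReal (t ^ k * |logDeriv φ t| ^ (k + 1)) ≠ ⊤) :
    IntegrableOn (fun t ↦ t ^ k * |logDeriv φ t| ^ (k + 1)) (Ioo 0 R) := by
  have hlog : Measurable (logDeriv φ) := (measurable_deriv φ).div hφ
  refine (lintegral_ofReal_ne_top_iff_integrable ?_ ?_).1 hfin
  · exact ((measurable_id.pow_const k).mul (hlog.abs.pow_const (k + 1))).aestronglyMeasurable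
  · filter_upwards [ae_restrict_mem measurableSet_Ioo] with t ht
    exact mul_nonneg (pow_nonneg ht.1.le k) (by positivity)

theorem eq_zero_of_lintegral_logDeriv_ne_top (hφ : LipschitzWith K φ) (h0 : φ 0 = 0) {k : ℕ}
    {R : ℝ} (hfin : ∫⁻ t in Ioo 0 R, ENNReal.ofReal (t ^ k * |logDeriv φ t| ^ (k + 1)) ≠ ⊤)
    {r : ℝ} (hr : r ∈ Ioo 0 R) : φ r = 0 := by
  by_contra hne
  obtain ⟨s, ⟨hs0, hsr⟩, hφs, hpos⟩ := exists_last_zero hr.1.le hφ.continuous.continuousOn h0 hne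
  set F : ℝ → ℝ := fun t ↦ t ^ k * |logDeriv φ t| ^ (k + 1)
  have hF : IntegrableOn F (Ioo 0 R) :=
    integrableOn_pow_mul_abs_logDeriv_pow hφ.continuous.measurable hfin
  set C := Real.log K + 2⁻¹ * Real.log r + 2 ^ k * ∫ t in Ioo 0 R, F t with hC
  have hbound : ∀ δ ∈ Ioo 0 (r - s), Real.log (φ r) ≤ 2⁻¹ * Real.log δ + C := by
    intro δ ⟨hδ0, hδ⟩
    have hc : 0 < s + δ := by linarith
    have hcr : s + δ ≤ r := by linarith
    have hsub : Ioc (s + δ) r ⊆ Ioo 0 R := fun t ht ↦ ⟨hc.trans ht.1, ht.2.trans_lt hr.2⟩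
    have hgrowth : Real.log (φ r) - Real.log (φ (s + δ)) ≤
        2⁻¹ * Real.log (r / (s + δ)) + 2 ^ k * ∫ t in (s + δ)..r, F t :=
      log_sub_log_le_integral_logDeriv hc hcr hφ.lipschitzOnWith
        (fun t ht ↦ hpos t ⟨by linarith [ht.1], ht.2⟩)
        ((intervalIntegrable_iff_integrableOn_Ioc_of_le hcr).2 (hF.mono_set hsub))
    have hsmall : Real.log (φ (s + δ)) ≤ Real.log K + Real.log δ := by
      simpa [abs_of_pos hδ0] using
        log_le_log_add_log_dist hφ hφs (hpos (s + δ) ⟨by linarith, hcr⟩)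
    have henergy : ∫ t in (s + δ)..r, F t ≤ ∫ t in Ioo 0 R, F t := by
      rw [intervalIntegral.integral_of_le hcr]
      refine setIntegral_mono_set hF ?_ hsub.eventuallyLE
      filter_upwards [ae_restrict_mem measurableSet_Ioo] with t ht
      exact mul_nonneg (pow_nonneg ht.1.le k) (by positivity)
    have henergy' := mul_le_mul_of_nonneg_left henergy (pow_nonneg zero_le_two k)
    have hlog : Real.log δ ≤ Real.log (s + δ) := Real.log_le_log hδ0 (by linarith)
    rw [Real.log_div hr.1.ne' hc.ne'] at hgrowth
    linarith
  have hlim : Tendsto (fun δ ↦ 2⁻¹ * Real.log δ + C) (𝓝[>] 0) atBot :=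
    tendsto_atBot_add_const_right _ _
      (Real.tendsto_log_nhdsGT_zero.const_mul_atBot (by norm_num))
  obtain ⟨δ, hδ, hlt⟩ := (eventually_mem_set.2 (Ioo_mem_nhdsGT (sub_pos.2 hsr))).and
    (hlim.eventually_lt_atBot (Real.log (φ r))) |>.exists
  exact (hbound δ hδ).not_gt hlt

end LogDeriv

section Polar

variable {E : Type*} [NormedAddCommGroup E] [NormedSpace ℝ E] [FiniteDimensional ℝ E]
  [MeasurableSpace E] [BorelSpace E] {μ : Measure E} [μ.IsAddHaarMeasure]

lemma eq_on_ball_of_ae_eq_on_ray {X : Type*} [TopologicalSpace X] [T1Space X] {f : E → X}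
    (hf : Continuous f) {a : E} {c : X} (ha : f a = c) {R : ℝ}
    (hray : ∀ᵐ θ : sphere (0 : E) 1 ∂μ.toSphere, ∀ t ∈ Ioo 0 R, f (a + t • (θ : E)) = c)
    {x : E} (hx : x ∈ ball a R) : f x = c := by
  rcases eq_or_ne x a with rfl | hxa
  · exact ha
  have hnorm : 0 < ‖x - a‖ := norm_sub_pos_iff.2 hxa
  set S : Set (sphere (0 : E) 1) := {θ | f (a + ‖x - a‖ • (θ : E)) = c}
  have hclosed : IsClosed S := isClosed_singleton.preimage (hf.comp (by fun_prop))
  have hdense : Dense S :=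
    (Measure.dense_of_ae hray).mono
      fun θ (hθ : ∀ t ∈ Ioo 0 R, f (a + t • (θ : E)) = c) ↦ hθ _ ⟨hnorm, mem_ball_iff_norm.1 hx⟩
  have hdir : ⟨‖x - a‖⁻¹ • (x - a), by simp [norm_smul, hnorm.ne']⟩ ∈ S :=
    hclosed.closure_eq ▸ hdense _
  simpa [S, smul_smul, hnorm.ne'] using hdir

variable [Nontrivial E]

lemma lintegral_eq_lintegral_sphere_lintegral_Ioi (a : E) {f : E → ℝ≥0∞} (hf : Measurable f) :
    ∫⁻ x, f x ∂μ = ∫⁻ θ : sphere (0 : E) 1, (∫⁻ t in Ioi (0 : ℝ),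
      ENNReal.ofReal (t ^ (finrank ℝ E - 1)) * f (a + t • (θ : E))) ∂μ.toSphere := by
  have hm : Measurable fun p : sphere (0 : E) 1 × Ioi (0 : ℝ) ↦
      f (a + (p.2 : ℝ) • (p.1 : E)) := by fun_prop
  calc ∫⁻ x, f x ∂μ = ∫⁻ x, f (a + x) ∂μ := (lintegral_add_left_eq_self f a).symm
    _ = ∫⁻ x : ({0}ᶜ : Set E), f (a + x) ∂(μ.comap (↑)) := by
      rw [lintegral_subtype_comap (measurableSet_singleton _).compl fun x ↦ f (a + x),
        restrict_compl_singleton]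
    _ = ∫⁻ p, f (a + (p.2 : ℝ) • (p.1 : E))
          ∂μ.toSphere.prod (.volumeIoiPow (finrank ℝ E - 1)) := by
      rw [← μ.measurePreserving_homeomorphUnitSphereProd.lintegral_comp hm]
      refine lintegral_congr fun x ↦ ?_
      have hx : ‖(x : E)‖ ≠ 0 := norm_ne_zero_iff.2 x.2
      simp [smul_smul, hx]
    _ = _ := by
      rw [lintegral_prod _ hm.aemeasurable]
      refine lintegral_congr fun θ ↦ ?_
      rw [Measure.volumeIoiPow, lintegral_withDensity_eq_lintegral_mul _ (by fun_prop)
        (by fun_prop)]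
      exact lintegral_subtype_comap measurableSet_Ioi
        fun t : ℝ ↦ ENNReal.ofReal (t ^ (finrank ℝ E - 1)) * f (a + t • (θ : E))

lemma ae_lintegral_ray_lt_top (a : E) {f : E → ℝ≥0∞} (hf : Measurable f)
    (hfin : ∫⁻ x, f x ∂μ ≠ ⊤) :
    ∀ᵐ θ : sphere (0 : E) 1 ∂μ.toSphere, ∫⁻ t in Ioi (0 : ℝ),
      ENNReal.ofReal (t ^ (finrank ℝ E - 1)) * f (a + t • (θ : E)) < ⊤ := by
  rw [lintegral_eq_lintegral_sphere_lintegral_Ioi a hf] at hfin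
  refine ae_lt_top ?_ hfin
  exact Measurable.lintegral_prod_right' (f := fun p : sphere (0 : E) 1 × ℝ ↦
    ENNReal.ofReal (p.2 ^ (finrank ℝ E - 1)) * f (a + p.2 • (p.1 : E))) (by fun_prop)

lemma ae_ae_ray_of_ae (a : E) {p : E → Prop} (hp : ∀ᵐ x ∂μ, p x) :
    ∀ᵐ θ : sphere (0 : E) 1 ∂μ.toSphere, ∀ᵐ t ∂volume.restrict (Ioi (0 : ℝ)),
      p (a + t • (θ : E)) := by
  -- The function `⊤` on a null set, `0` elsewhere, has finite integral, hence is finite a.e. on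
  -- almost every ray.
  obtain ⟨N, hpN, hN, hN0⟩ := exists_measurable_superset_of_null hp
  have hNm : Measurable (N.indicator fun _ ↦ (⊤ : ℝ≥0∞)) := measurable_const.indicator hN
  have hfin : ∫⁻ x, N.indicator (fun _ ↦ ⊤) x ∂μ ≠ ⊤ := by simp [lintegral_indicator hN, hN0]
  filter_upwards [ae_lintegral_ray_lt_top a hNm hfin] with θ hθ
  filter_upwards [ae_lt_top (by fun_prop) hθ.ne, ae_restrict_mem measurableSet_Ioi] with t ht ht0
  by_contra hnp
  have hmem : a + t • (θ : E) ∈ N := hpN hnp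
  simp [hmem, pow_pos (mem_Ioi.1 ht0)] at ht

end Polar

section LogGrad

variable {E : Type*} [NormedAddCommGroup E] [NormedSpace ℝ E] {K : ℝ≥0} {u : E → ℝ} {a : E} {R : ℝ}

/-- The norm of the gradient of `log |u|`, the integrand of the divergent integral. By the
convention `x / 0 = 0` it is `0` at the zeros of `u`, so that integrals over a set do not see
them. -/
noncomputable def logGradNorm (u : E → ℝ) (x : E) : ℝ := ‖fderiv ℝ u x‖ / |u x|

lemma logGradNorm_nonneg (u : E → ℝ) (x : E) : 0 ≤ logGradNorm u x :=
  div_nonneg (norm_nonneg _) (abs_nonneg _)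

lemma logGradNorm_of_eq_zero {x : E} (hx : u x = 0) : logGradNorm u x = 0 := by
  simp [logGradNorm, hx]

lemma logGradNorm_congr {v : E → ℝ} {x : E} (h : u =ᶠ[𝓝 x] v) :
    logGradNorm u x = logGradNorm v x := by
  rw [logGradNorm, logGradNorm, h.fderiv_eq, h.eq_of_nhds]

lemma measurable_logGradNorm [MeasurableSpace E] [OpensMeasurableSpace E] (hu : Measurable u) :
    Measurable (logGradNorm u) :=
  (measurable_fderiv ℝ u).norm.div hu.norm

lemma abs_logDeriv_ray_le_logGradNorm {θ : E} (hθ : ‖θ‖ ≤ 1) {t : ℝ}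
    (hu : DifferentiableAt ℝ u (a + t • θ)) :
    |logDeriv (fun s : ℝ ↦ u (a + s • θ)) t| ≤ logGradNorm u (a + t • θ) := by
  have hray : HasDerivAt (fun s : ℝ ↦ a + s • θ) θ t := by
    simpa using ((hasDerivAt_id t).smul_const θ).const_add a
  have hderiv : HasDerivAt (fun s : ℝ ↦ u (a + s • θ)) (fderiv ℝ u (a + t • θ) θ) t :=
    hu.hasFDerivAt.comp_hasDerivAt t hray
  rw [logDeriv_apply, hderiv.deriv, abs_div, logGradNorm]
  gcongr
  exact (fderiv ℝ u _).unit_le_opNorm θ hθ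

lemma lipschitzWith_ray (hu : LipschitzWith K u) (a : E) {θ : E} (hθ : ‖θ‖ ≤ 1) :
    LipschitzWith K fun t : ℝ ↦ u (a + t • θ) := by
  have hray : LipschitzWith 1 fun t : ℝ ↦ a + t • θ := by
    refine LipschitzWith.of_dist_le_mul fun s t ↦ ?_
    rw [dist_add_left, dist_eq_norm, dist_eq_norm, ← sub_smul, norm_smul, mul_comm]
    gcongr
    exact hθ
  simpa only [mul_one] using! hu.comp hray

lemma lintegral_logDeriv_ray_le {θ : E} (hθ : ‖θ‖ = 1) (k : ℕ)
    (hu : ∀ᵐ t ∂volume.restrict (Ioi (0 : ℝ)), DifferentiableAt ℝ u (a + t • θ)) :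
    ∫⁻ t in Ioo 0 R,
        ENNReal.ofReal (t ^ k * |logDeriv (fun s : ℝ ↦ u (a + s • θ)) t| ^ (k + 1)) ≤
      ∫⁻ t in Ioi (0 : ℝ), ENNReal.ofReal (t ^ k) *
        (ball a R).indicator (fun x ↦ ENNReal.ofReal (logGradNorm u x ^ (k + 1))) (a + t • θ) := by
  refine (lintegral_mono_ae ?_).trans (lintegral_mono_set Ioo_subset_Ioi_self)
  filter_upwards [ae_restrict_mem measurableSet_Ioo,
    ae_restrict_of_ae_restrict_of_subset Ioo_subset_Ioi_self hu] with t ⟨ht0, htR⟩ hd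
  have hmem : a + t • θ ∈ ball a R := by simpa [norm_smul, hθ, abs_of_pos ht0] using htR
  rw [indicator_of_mem hmem, ← ENNReal.ofReal_mul (pow_nonneg ht0.le k)]
  gcongr
  exact abs_logDeriv_ray_le_logGradNorm hθ.le hd

variable [FiniteDimensional ℝ E] [MeasurableSpace E] [BorelSpace E] {μ : Measure E}
  [μ.IsAddHaarMeasure]

section Nontrivial

variable [Nontrivial E]

lemma ae_eq_zero_on_ray_of_lintegral_ne_top (hu : LipschitzWith K u) (ha : u a = 0)
    (hfin : ∫⁻ x in ball a R, ENNReal.ofReal (logGradNorm u x ^ finrank ℝ E) ∂μ ≠ ⊤) :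
    ∀ᵐ θ : sphere (0 : E) 1 ∂μ.toSphere, ∀ t ∈ Ioo 0 R, u (a + t • (θ : E)) = 0 := by
  obtain ⟨k, hk⟩ := Nat.exists_eq_add_one.2 (finrank_pos (R := ℝ) (M := E))
  have hmeas : Measurable ((ball a R).indicator fun x ↦
      ENNReal.ofReal (logGradNorm u x ^ finrank ℝ E)) :=
    ((measurable_logGradNorm hu.continuous.measurable).pow_const _).ennreal_ofReal.indicator
      measurableSet_ball
  rw [← lintegral_indicator measurableSet_ball] at hfin
  filter_upwards [ae_lintegral_ray_lt_top a hmeas hfin,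
    ae_ae_ray_of_ae a (hu.ae_differentiableAt (μ := μ))] with θ henergy hdiff t ht
  have hθ : ‖(θ : E)‖ = 1 := norm_eq_of_mem_sphere θ
  simp only [hk, Nat.add_sub_cancel] at henergy
  exact eq_zero_of_lintegral_logDeriv_ne_top (lipschitzWith_ray hu a hθ.le) (by simpa using ha)
    ((lintegral_logDeriv_ray_le hθ k hdiff).trans_lt henergy).ne ht

theorem eq_zero_on_ball_of_lintegral_ne_top (hu : LipschitzWith K u) (ha : u a = 0)
    (hfin : ∫⁻ x in ball a R, ENNReal.ofReal (logGradNorm u x ^ finrank ℝ E) ∂μ ≠ ⊤)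
    {x : E} (hx : x ∈ ball a R) : u x = 0 :=
  eq_on_ball_of_ae_eq_on_ray hu.continuous ha
    (ae_eq_zero_on_ray_of_lintegral_ne_top hu ha hfin) hx

theorem eq_zero_on_ball_of_setLIntegral_sdiff_ne_top (hu : LipschitzOnWith K u (ball a R))
    (ha : u a = 0) {p : ℝ} (hp : finrank ℝ E ≤ p)
    (hfin : ∫⁻ x in ball a R \ u ⁻¹' {0}, ENNReal.ofReal (logGradNorm u x ^ p) ∂μ ≠ ⊤)
    {x : E} (hx : x ∈ ball a R) : u x = 0 := by
  obtain ⟨w, hw, huw⟩ := hu.extend_real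
  have hp0 : p ≠ 0 := ((Nat.cast_pos.2 finrank_pos).trans_le hp).ne'
  have hball : ∫⁻ x in ball a R, ENNReal.ofReal (logGradNorm u x ^ p) ∂μ ≠ ⊤ := by
    refine ne_top_of_le_ne_top hfin (setLIntegral_le_setLIntegral_sdiff measurableSet_ball ?_)
    rintro x ⟨-, hx⟩
    rw [logGradNorm_of_eq_zero hx, Real.zero_rpow hp0, ENNReal.ofReal_zero]
  have hcongr : ∀ x ∈ ball a R, logGradNorm w x = logGradNorm u x := fun x hx ↦
    logGradNorm_congr (huw.symm.eventuallyEq_of_mem (isOpen_ball.mem_nhds hx))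
  have : Fact (μ (ball a R) < ⊤) := ⟨measure_ball_lt_top⟩
  have hwfin : ∫⁻ x in ball a R, ENNReal.ofReal (logGradNorm w x ^ finrank ℝ E) ∂μ ≠ ⊤ := by
    refine lintegral_ofReal_pow_ne_top_of_rpow (logGradNorm_nonneg w) hp ?_
    rwa [setLIntegral_congr_fun measurableSet_ball fun x hx ↦ by rw [hcongr x hx]]
  have hwa : w a = 0 := by rw [← huw (mem_ball_self (pos_of_mem_ball hx)), ha]
  rw [huw hx, eq_zero_on_ball_of_lintegral_ne_top hw hwa hwfin hx]

end Nontrivial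

theorem divergence_near_frontier_point_general {s Ω U : Set E} (hs : s ∈ 𝓝 a)
    (hu : LipschitzOnWith K u s) (hΩ : Ω ∈ 𝓝 a) (ha : a ∈ frontier {x ∈ Ω | u x = 0})
    (hU : U ∈ 𝓝 a) {p : ℝ} (hp : finrank ℝ E ≤ p) :
    ∫⁻ x in U \ {x ∈ Ω | u x = 0}, ENNReal.ofReal ((‖fderiv ℝ u x‖ / |u x|) ^ p) ∂μ = ⊤ := by
  by_contra hfin
  have : Nontrivial E := nontrivial_of_mem_frontier ha
  obtain ⟨R, hR, hball⟩ := Metric.mem_nhds_iff.1 (inter_mem (inter_mem hs hΩ) hU)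
  have hua : u a = 0 := by
    simpa using (hu.continuousOn.continuousAt hs).continuousWithinAt.mem_closure
      (frontier_subset_closure ha) (show MapsTo u _ {0} from fun x hx ↦ hx.2)
  have hballfin : ∫⁻ x in ball a R \ u ⁻¹' {0}, ENNReal.ofReal (logGradNorm u x ^ p) ∂μ ≠ ⊤ :=
    ne_top_of_le_ne_top hfin <| lintegral_mono_set fun x hx ↦
      ⟨(hball hx.1).2, fun hZ ↦ hx.2 hZ.2⟩
  have hzero : ∀ x ∈ ball a R, u x = 0 := fun x ↦
    eq_zero_on_ball_of_setLIntegral_sdiff_ne_top (hu.mono fun x hx ↦ (hball hx).1.1) hua hp hballfin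
  exact ha.2 <| mem_interior.2 ⟨ball a R, fun x hx ↦ ⟨(hball hx).1.2, hzero x hx⟩, isOpen_ball,
    mem_ball_self hR⟩

end LogGrad

/-- Remark 3.7: under the hypotheses of Theorem 3.6, for every point `a ∈ Ω` on the
frontier of the zero set `Z_u` and every open neighborhood `U ⊆ Ω` of `a`,
`∫_{U∖Z_u} (|∇u|/|u|)ⁿ dv = ∞`. -/
theorem divergence_near_frontier_point (n : ℕ) (hn : 2 ≤ n)
    (Ω : Set (EuclideanSpace ℝ (Fin n))) (hΩopen : IsOpen Ω) (hΩconn : IsConnected Ω)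
    (u : EuclideanSpace ℝ (Fin n) → ℝ)
    (hLip : ∀ x ∈ Ω, ∃ (K : NNReal) (t : Set (EuclideanSpace ℝ (Fin n))),
      t ∈ nhds x ∧ t ⊆ Ω ∧ LipschitzOnWith K u t)
    (hZne : {x ∈ Ω | u x = 0} ≠ ∅) (hZprop : {x ∈ Ω | u x = 0} ≠ Ω)
    (a : EuclideanSpace ℝ (Fin n)) (haΩ : a ∈ Ω)
    (haF : a ∈ frontier {x ∈ Ω | u x = 0})
    (U : Set (EuclideanSpace ℝ (Fin n))) (hUopen : IsOpen U) (haU : a ∈ U)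
    (hUΩ : U ⊆ Ω) :
    ∫⁻ x in U \ {x ∈ Ω | u x = 0},
      ENNReal.ofReal ((‖fderiv ℝ u x‖ / |u x|) ^ n) = ⊤ := by
  obtain ⟨K, s, hs, -, hu⟩ := hLip a haΩ
  simpa using divergence_near_frontier_point_general (μ := volume) hs hu (hΩopen.mem_nhds haΩ) haF
    (hUopen.mem_nhds haU) (p := n) (by simp)
end

section
/- Let n ≥ 1, let Ω be a nonempty open connected subset of ℝⁿ, x₀ ∈ Ω, y₀ ∈ ℝ, and let f : ℝ → ℝⁿ be Lipschitz on ℝ. Suppose u₁, u₂ : Ω → ℝ are Lipschitz on Ω, satisfy u₁(x₀) = u₂(x₀) = y₀, and for each i ∈ {1,2}, for almost every x ∈ Ω, uᵢ is differentiable at x with gradient ∇uᵢ(x) = f(uᵢ(x)). Then u₁ = u₂ on Ω. -/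
open MeasureTheory

/-!
The set where `u₁ = u₂` is closed in `Ω`, so it suffices to see that it is open. Near a point `c` of
this set, `w = u₁ - u₂` vanishes at `c` and satisfies `‖Dw‖ ≤ K ‖w‖` almost everywhere, `K` being a
Lipschitz constant of `f` near `u₁ c`. If `w` is `L`-Lipschitz on the ball `B(c, r)`, then
`‖w‖ ≤ r L` there, so `‖Dw‖ ≤ K r L` almost everywhere and `w` is even `K r L`-Lipschitz. When
`K r < 1`, iterating this improvement forces `w = 0` on the ball.

The mean value inequality used here only controls the derivative almost everywhere: by Fubini,
almost every translate of a given segment meets the exceptional set in a null set, the fundamental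
theorem of calculus applies along such translates, and continuity recovers the given segment.
-/

open Filter Topology
open scoped NNReal Interval

lemma locallyLipschitzOn_of_lipschitzOnWith {X Y : Type*} [PseudoEMetricSpace X]
    [PseudoEMetricSpace Y] {K : ℝ≥0} {u : X → Y} {s : Set X} (hu : LipschitzOnWith K u s) :
    LocallyLipschitzOn s u :=
  fun _ _ => ⟨K, s, self_mem_nhdsWithin, hu⟩

lemma eqOn_of_isPreconnected_of_eventuallyEq {X Y : Type*} [TopologicalSpace X]
    [TopologicalSpace Y] [T2Space Y] {s : Set X} (hs : IsPreconnected s) {u₁ u₂ : X → Y}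
    (hu₁ : ContinuousOn u₁ s) (hu₂ : ContinuousOn u₂ s)
    (hloc : ∀ c ∈ s, u₁ c = u₂ c → u₁ =ᶠ[𝓝[s] c] u₂) {x₀ : X} (hx₀ : x₀ ∈ s)
    (h₀ : u₁ x₀ = u₂ x₀) : Set.EqOn u₁ u₂ s := by
  have hiff : ∀ c ∈ s, ∀ᶠ x in 𝓝[s] c, u₁ c = u₂ c ↔ u₁ x = u₂ x := fun c hc => by
    by_cases h : u₁ c = u₂ c
    · filter_upwards [hloc c hc h] with x hx using iff_of_true h hx
    · have hne : ∀ᶠ x in 𝓝[s] c, u₁ x ≠ u₂ x :=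
        ((hu₁ c hc).prodMk (hu₂ c hc)).eventually (isClosed_diagonal.isOpen_compl.mem_nhds h)
      filter_upwards [hne] with x hx using iff_of_false h hx
  exact fun x hx => (hs.induction₂ (fun x y => u₁ x = u₂ x ↔ u₁ y = u₂ y) hiff
    (fun _ _ _ _ _ _ => Iff.trans) (fun _ _ _ _ => Iff.symm) hx₀ hx).1 h₀

section Uniqueness

variable {E F : Type*} [NormedAddCommGroup E] [NormedSpace ℝ E]
  [NormedAddCommGroup F] [NormedSpace ℝ F]

lemma norm_sub_le_of_ae_norm_hasDerivAt_le {γ γ' : ℝ → F} {a b C : ℝ} {L : ℝ≥0}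
    (hγ : LipschitzOnWith L γ [[a, b]]) (hderiv : ∀ᵐ t, t ∈ Ι a b → HasDerivAt γ (γ' t) t)
    (hbound : ∀ᵐ t, t ∈ Ι a b → ‖γ' t‖ ≤ C) : ‖γ b - γ a‖ ≤ C * |b - a| := by
  -- A norming functional reduces to real-valued functions, for which the fundamental theorem holds.
  obtain ⟨φ, hφ, hφγ⟩ := exists_dual_vector'' ℝ (γ b - γ a)
  have hftc : ∫ t in a..b, deriv (φ ∘ γ) t = φ (γ b - γ a) := by
    rw [(φ.lipschitz.comp_lipschitzOnWith hγ).absolutelyContinuousOnInterval.integral_deriv_eq_sub,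
      map_sub, Function.comp_apply, Function.comp_apply]
  calc ‖γ b - γ a‖ = ‖∫ t in a..b, deriv (φ ∘ γ) t‖ := by
        rw [hftc, hφγ, RCLike.ofReal_real_eq_id, id, norm_norm]
    _ ≤ C * |b - a| := by
        refine intervalIntegral.norm_integral_le_of_norm_le_const_ae ?_
        filter_upwards [hderiv, hbound] with t hd hb ht
        rw [(φ.hasFDerivAt.comp_hasDerivAt t (hd ht)).deriv]
        exact (φ.le_of_opNorm_le_of_le hφ (hb ht)).trans_eq (one_mul C)

lemma norm_add_sub_le_of_ae_norm_hasFDerivAt_le {w : E → F} {w' : E → E →L[ℝ] F} {s : Set E}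
    (hs : Convex ℝ s) {L : ℝ≥0} (hw : LipschitzOnWith L w s) {x v : E} (hx : x ∈ s)
    (hxv : x + v ∈ s) {C : ℝ}
    (hderiv : ∀ᵐ t : ℝ, x + t • v ∈ s → HasFDerivAt w (w' (x + t • v)) (x + t • v))
    (hbound : ∀ᵐ t : ℝ, x + t • v ∈ s → ‖w' (x + t • v)‖ ≤ C) :
    ‖w (x + v) - w x‖ ≤ C * ‖v‖ := by
  have hseg : Set.MapsTo (fun t : ℝ => x + t • v) [[0, 1]] s := fun t ht =>
    hs.add_smul_mem hx hxv (by rwa [Set.uIcc_of_le zero_le_one] at ht)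
  have hline (t : ℝ) : HasDerivAt (fun t : ℝ => x + t • v) v t := by
    simpa using ((hasDerivAt_id t).smul_const v).const_add x
  have hline_lip : LipschitzWith ‖v‖₊ fun t : ℝ => x + t • v :=
    lipschitzWith_of_nnnorm_deriv_le (fun t => (hline t).differentiableAt)
      fun t => by rw [(hline t).deriv]
  have hmean := norm_sub_le_of_ae_norm_hasDerivAt_le (C := C * ‖v‖)
    (hw.comp hline_lip.lipschitzOnWith hseg) (γ' := fun t => w' (x + t • v) v)
    (by filter_upwards [hderiv] with t hd ht using
      (hd (hseg (Set.uIoc_subset_uIcc ht))).comp_hasDerivAt t (hline t))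
    (by filter_upwards [hbound] with t hb ht using
      (w' _).le_of_opNorm_le (hb (hseg (Set.uIoc_subset_uIcc ht))) v)
  simpa using hmean

variable [FiniteDimensional ℝ E] [MeasurableSpace E] [BorelSpace E]
  {μ : Measure E} [μ.IsAddHaarMeasure]

lemma ae_ae_add_smul_of_ae {p : E → Prop} (h : ∀ᵐ x ∂μ, p x) (v : E) :
    ∀ᵐ x ∂μ, ∀ᵐ t : ℝ, p (x + t • v) := by
  obtain ⟨T, hT, hT_meas, hTp⟩ := h.exists_measurable_mem
  have hlines : ∀ᵐ x ∂μ, ∀ᵐ t : ℝ, x + LinearMap.toSpanSingleton ℝ E v t ∈ T :=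
    (ae_ae_add_linearMap_mem_iff _ volume μ hT_meas).2 hT
  filter_upwards [hlines] with x hx
  filter_upwards [hx] with t ht using hTp _ ht

lemma lipschitzOnWith_of_ae_nnnorm_hasFDerivAt_le {w : E → F} {w' : E → E →L[ℝ] F} {s : Set E}
    (hs : Convex ℝ s) (hs' : IsOpen s) {L C : ℝ≥0} (hw : LipschitzOnWith L w s)
    (hderiv : ∀ᵐ x ∂μ, x ∈ s → HasFDerivAt w (w' x) x)
    (hbound : ∀ᵐ x ∂μ, x ∈ s → ‖w' x‖₊ ≤ C) : LipschitzOnWith C w s := by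
  refine LipschitzOnWith.of_dist_le_mul fun b hb a ha => ?_
  obtain ⟨v, rfl⟩ : ∃ v, b = a + v := ⟨b - a, by abel⟩
  let U : Set E := s ∩ (· + v) ⁻¹' s
  have hU : IsOpen U := hs'.inter (hs'.preimage (continuous_add_const v))
  have hgood : ∀ᵐ x ∂μ, x ∈ U → ‖w (x + v) - w x‖ ≤ C * ‖v‖ := by
    filter_upwards [ae_ae_add_smul_of_ae hderiv v, ae_ae_add_smul_of_ae hbound v]
      with x hd hb hx using norm_add_sub_le_of_ae_norm_hasFDerivAt_le hs hw hx.1 hx.2 hd hb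
  have hcont : ContinuousOn (fun x => ‖w (x + v) - w x‖) U :=
    ((hw.continuousOn.comp (by fun_prop) fun _ hx => hx.2).sub
      (hw.continuousOn.mono Set.inter_subset_left)).norm
  have hle : ‖w (a + v) - w a‖ ≤ C * ‖v‖ :=
    ((hcont a ⟨ha, hb⟩).mono Set.inter_subset_left).closure_le
      ((Measure.dense_of_ae hgood).open_subset_closure_inter hU ⟨ha, hb⟩)
      continuousWithinAt_const fun x hx => hx.2 hx.1
  rwa [dist_eq_norm, dist_eq_norm, add_sub_cancel_left]

lemma lipschitzOnWith_ball_of_ae_nnnorm_hasFDerivAt_le_mul {w : E → F} {w' : E → E →L[ℝ] F}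
    {c : E} {r K L : ℝ≥0} (hw : LipschitzOnWith L w (Metric.ball c r)) (hc : w c = 0)
    (hderiv : ∀ᵐ x ∂μ, x ∈ Metric.ball c r → HasFDerivAt w (w' x) x)
    (hbound : ∀ᵐ x ∂μ, x ∈ Metric.ball c r → ‖w' x‖₊ ≤ K * ‖w x‖₊) :
    LipschitzOnWith (K * r * L) w (Metric.ball c r) := by
  have hsize : ∀ x ∈ Metric.ball c r, ‖w x‖₊ ≤ r * L := fun x hx => by
    have hcr : c ∈ Metric.ball c (r : ℝ) := Metric.mem_ball_self (Metric.pos_of_mem_ball hx)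
    calc ‖w x‖ = dist (w x) (w c) := by rw [hc, dist_zero_right]
      _ ≤ L * dist x c := hw.dist_le_mul x hx c hcr
      _ ≤ L * r := by gcongr; exact (Metric.mem_ball.1 hx).le
      _ = r * L := mul_comm _ _
  refine lipschitzOnWith_of_ae_nnnorm_hasFDerivAt_le (convex_ball c r) Metric.isOpen_ball hw
    hderiv ?_
  filter_upwards [hbound] with x hb hx
  calc ‖w' x‖₊ ≤ K * ‖w x‖₊ := hb hx
    _ ≤ K * (r * L) := by gcongr; exact hsize x hx
    _ = K * r * L := (mul_assoc _ _ _).symm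

lemma eqOn_zero_ball_of_ae_nnnorm_hasFDerivAt_le_mul {w : E → F} {w' : E → E →L[ℝ] F}
    {c : E} {r K L : ℝ≥0} (hKr : K * r < 1) (hw : LipschitzOnWith L w (Metric.ball c r))
    (hc : w c = 0) (hderiv : ∀ᵐ x ∂μ, x ∈ Metric.ball c r → HasFDerivAt w (w' x) x)
    (hbound : ∀ᵐ x ∂μ, x ∈ Metric.ball c r → ‖w' x‖₊ ≤ K * ‖w x‖₊) :
    Set.EqOn w 0 (Metric.ball c r) := by
  have hlip (n : ℕ) : LipschitzOnWith ((K * r) ^ n * L) w (Metric.ball c r) := by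
    induction n with
    | zero => simpa using hw
    | succ n ih =>
      rw [pow_succ', mul_assoc]
      exact lipschitzOnWith_ball_of_ae_nnnorm_hasFDerivAt_le_mul ih hc hderiv hbound
  intro x hx
  have hcr : c ∈ Metric.ball c (r : ℝ) := Metric.mem_ball_self (Metric.pos_of_mem_ball hx)
  have hnorm (n : ℕ) : ‖w x‖₊ ≤ (K * r) ^ n * L * nndist x c := by
    have hdist := (hlip n).dist_le_mul x hx c hcr
    rwa [hc, dist_zero_right] at hdist
  have hlim : Tendsto (fun n : ℕ => (K * r) ^ n * L * nndist x c) atTop (𝓝 0) := by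
    simpa using
      ((NNReal.tendsto_pow_atTop_nhds_zero_of_lt_one hKr).mul_const L).mul_const (nndist x c)
  exact nnnorm_eq_zero.1 (le_zero_iff.1 (ge_of_tendsto' hlim hnorm))

lemma eventuallyEq_zero_of_ae_nnnorm_hasFDerivAt_le_mul {w : E → F} {w' : E → E →L[ℝ] F}
    {c : E} {s : Set E} (hs : s ∈ 𝓝 c) {K L : ℝ≥0} (hw : LipschitzOnWith L w s) (hc : w c = 0)
    (hderiv : ∀ᵐ x ∂μ, x ∈ s → HasFDerivAt w (w' x) x)
    (hbound : ∀ᵐ x ∂μ, x ∈ s → ‖w' x‖₊ ≤ K * ‖w x‖₊) : w =ᶠ[𝓝 c] 0 := by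
  obtain ⟨ε, hε, hεs⟩ := Metric.nhds_basis_ball.mem_iff.1 hs
  obtain ⟨δ, hδ, hKδ⟩ := exists_pos_mul_lt one_pos (K : ℝ)
  lift ε to ℝ≥0 using hε.le
  lift δ to ℝ≥0 using hδ.le
  have hKr : K * min ε δ < 1 := (mul_le_mul_right (min_le_right ε δ) K).trans_lt hKδ
  have hball : Metric.ball c (min ε δ : ℝ≥0) ⊆ s :=
    (Metric.ball_subset_ball (NNReal.coe_le_coe.2 (min_le_left ε δ))).trans hεs
  have hzero := eqOn_zero_ball_of_ae_nnnorm_hasFDerivAt_le_mul hKr (hw.mono hball) hc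
    (hderiv.mono fun x h hx => h (hball hx)) (hbound.mono fun x h hx => h (hball hx))
  exact hzero.eventuallyEq_of_mem (Metric.ball_mem_nhds c (lt_min hε hδ))

lemma eventuallyEq_of_ae_hasFDerivAt_comp {f : F → E →L[ℝ] F} (hf : LocallyLipschitz f)
    {Ω : Set E} (hΩ : IsOpen Ω) {u₁ u₂ : E → F} (hu₁ : LocallyLipschitzOn Ω u₁)
    (hu₂ : LocallyLipschitzOn Ω u₂) (hderiv₁ : ∀ᵐ x ∂μ, x ∈ Ω → HasFDerivAt u₁ (f (u₁ x)) x)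
    (hderiv₂ : ∀ᵐ x ∂μ, x ∈ Ω → HasFDerivAt u₂ (f (u₂ x)) x) {c : E} (hc : c ∈ Ω)
    (huc : u₁ c = u₂ c) : u₁ =ᶠ[𝓝 c] u₂ := by
  have hΩc : Ω ∈ 𝓝 c := hΩ.mem_nhds hc
  obtain ⟨K, V, hV, hfV⟩ := hf (u₁ c)
  obtain ⟨L₁, t₁, ht₁, hL₁⟩ := hu₁ hc
  obtain ⟨L₂, t₂, ht₂, hL₂⟩ := hu₂ hc
  rw [hΩ.nhdsWithin_eq hc] at ht₁ ht₂
  have hV₁ : u₁ ⁻¹' V ∈ 𝓝 c := hu₁.continuousOn.continuousAt hΩc hV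
  have hV₂ : u₂ ⁻¹' V ∈ 𝓝 c := hu₂.continuousOn.continuousAt hΩc (huc ▸ hV)
  let s : Set E := Ω ∩ (t₁ ∩ t₂) ∩ (u₁ ⁻¹' V ∩ u₂ ⁻¹' V)
  have hs : s ∈ 𝓝 c := inter_mem (inter_mem hΩc (inter_mem ht₁ ht₂)) (inter_mem hV₁ hV₂)
  have hw : LipschitzOnWith (L₁ + L₂) (fun x => u₁ x - u₂ x) s :=
    (hL₁.mono fun x hx => hx.1.2.1).sub (hL₂.mono fun x hx => hx.1.2.2)
  have hzero := eventuallyEq_zero_of_ae_nnnorm_hasFDerivAt_le_mul (μ := μ) (K := K)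
    (w' := fun x => f (u₁ x) - f (u₂ x)) hs hw (sub_eq_zero.2 huc)
    (by filter_upwards [hderiv₁, hderiv₂] with x h₁ h₂ hx using (h₁ hx.1.1).sub (h₂ hx.1.1))
    (.of_forall fun x hx => hfV.norm_sub_le hx.2.1 hx.2.2)
  filter_upwards [hzero] with x hx using sub_eq_zero.1 hx

theorem gradient_system_uniqueness_general {f : F → E →L[ℝ] F} (hf : LocallyLipschitz f)
    {Ω : Set E} (hΩopen : IsOpen Ω) (hΩconn : IsPreconnected Ω) {u₁ u₂ : E → F}
    (hu₁ : LocallyLipschitzOn Ω u₁) (hu₂ : LocallyLipschitzOn Ω u₂)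
    (hderiv₁ : ∀ᵐ x ∂μ, x ∈ Ω → HasFDerivAt u₁ (f (u₁ x)) x)
    (hderiv₂ : ∀ᵐ x ∂μ, x ∈ Ω → HasFDerivAt u₂ (f (u₂ x)) x)
    {x₀ : E} (hx₀ : x₀ ∈ Ω) (h₀ : u₁ x₀ = u₂ x₀) : Set.EqOn u₁ u₂ Ω :=
  eqOn_of_isPreconnected_of_eventuallyEq hΩconn hu₁.continuousOn hu₂.continuousOn
    (fun _ hc huc => (eventuallyEq_of_ae_hasFDerivAt_comp hf hΩopen hu₁ hu₂ hderiv₁ hderiv₂ hc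
      huc).filter_mono nhdsWithin_le_nhds) hx₀ h₀

end Uniqueness

/-- Corollary 3.10: for Lipschitz `f : ℝ → ℝⁿ`, there is at most one Lipschitz
solution to the gradient system `∇u = f(u)` on a domain `Ω ⊆ ℝⁿ` with a given
value `u(x₀) = y₀`. -/
theorem gradient_system_uniqueness (n : ℕ) (hn : 1 ≤ n)
    (Ω : Set (EuclideanSpace ℝ (Fin n))) (hΩopen : IsOpen Ω) (hΩconn : IsConnected Ω)
    (x₀ : EuclideanSpace ℝ (Fin n)) (hx₀ : x₀ ∈ Ω) (y₀ : ℝ)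
    (f : ℝ → EuclideanSpace ℝ (Fin n)) (hf : ∃ K : NNReal, LipschitzWith K f)
    (u₁ u₂ : EuclideanSpace ℝ (Fin n) → ℝ)
    (hu₁Lip : ∃ K : NNReal, LipschitzOnWith K u₁ Ω)
    (hu₂Lip : ∃ K : NNReal, LipschitzOnWith K u₂ Ω)
    (hu₁x₀ : u₁ x₀ = y₀) (hu₂x₀ : u₂ x₀ = y₀)
    (hu₁grad : ∀ᵐ x, x ∈ Ω → HasGradientAt u₁ (f (u₁ x)) x)
    (hu₂grad : ∀ᵐ x, x ∈ Ω → HasGradientAt u₂ (f (u₂ x)) x) :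
    Set.EqOn u₁ u₂ Ω := by
  obtain ⟨K, hK⟩ := hf
  obtain ⟨L₁, hL₁⟩ := hu₁Lip
  obtain ⟨L₂, hL₂⟩ := hu₂Lip
  exact gradient_system_uniqueness_general
    ((InnerProductSpace.toDual ℝ _).lipschitz.comp hK).locallyLipschitz hΩopen
    hΩconn.isPreconnected (locallyLipschitzOn_of_lipschitzOnWith hL₁)
    (locallyLipschitzOn_of_lipschitzOnWith hL₂) hu₁grad hu₂grad hx₀ (hu₁x₀.trans hu₂x₀.symm)
end

section
/- Let n ≥ 1 and let A be a nonempty closed proper subset of ℝⁿ. There exists a function F : ℝⁿ → ℝ that is C^∞ on the open set ℝⁿ ∖ A such that for every point a in the frontier of A and every radius r > 0, the lower Lebesgue integral ∫_{B(a,r) ∖ A} |F(x)|ⁿ dv is infinite. In particular, F cannot be extended to a function that is Lⁿ-integrable on any neighborhood of any frontier point of A. -/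
open MeasureTheory

/-!
Let `φ ≥ 0` be a smooth function whose zero set is exactly `A`, and put `F = exp (1 / φ)`. Near a
frontier point `a` the function `φ` is Lipschitz and vanishes on `A`, so `φ ≤ C · dist(·, A)` there.
If `y ∉ A` is close to `a` and `s = dist(y, A)`, the ball `B(y, s)` avoids `A` and
`F ≥ exp (1 / (2 C s))` on it, so the integral of `F ^ p` is at least a constant times
`exp (p / (2 C s)) s ^ d`, where `d` is the dimension. This is unbounded as `y → a`. The exponential
beats every power of `s`, so one `F` serves all exponents `p > 0`.
-/

open Asymptotics Filter Metric Set Topology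
open scoped ENNReal NNReal

section InfDist

variable {X : Type*} [PseudoMetricSpace X] {A : Set X} {a : X}

lemma tendsto_infDist_nhdsWithin_compl (hA : IsClosed A) (ha : a ∈ A) :
    Tendsto (infDist · A) (𝓝[Aᶜ] a) (𝓝[>] 0) := by
  refine tendsto_nhdsWithin_iff.2 ⟨?_, ?_⟩
  · rw [← infDist_zero_of_mem ha]
    exact (continuous_infDist_pt A).continuousWithinAt
  · filter_upwards [self_mem_nhdsWithin] with x hx
    exact (hA.notMem_iff_infDist_pos ⟨a, ha⟩).1 hx

lemma eventually_ball_infDist_subset (ha : a ∈ A) {V : Set X} (hV : V ∈ 𝓝[Aᶜ] a) :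
    ∀ᶠ y in 𝓝 a, ball y (infDist y A) ⊆ V := by
  obtain ⟨ρ, hρ, hρV⟩ := Metric.mem_nhdsWithin_iff.1 hV
  filter_upwards [ball_mem_nhds a (half_pos hρ)] with y hy x hx
  refine hρV ⟨?_, ball_infDist_subset_compl hx⟩
  have hya : infDist y A ≤ dist y a := infDist_le_dist_of_mem ha
  rw [mem_ball] at hx hy ⊢
  linarith [dist_triangle x y a]

lemma isBigO_infDist_of_lipschitzOnWith {E : Type*} [SeminormedAddCommGroup E] {f : X → E}
    {K : ℝ≥0} {t : Set X} (hf : LipschitzOnWith K f t) (ht : t ∈ 𝓝 a) (ha : a ∈ A)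
    (hfA : ∀ x ∈ A, f x = 0) : f =O[𝓝 a] (infDist · A) := by
  obtain ⟨ρ, hρ, hρt⟩ := Metric.mem_nhds_iff.1 ht
  refine IsBigO.of_bound K ?_
  filter_upwards [ball_mem_nhds a (half_pos hρ)] with x hx
  rw [mem_ball] at hx
  have norm_le_of_mem {p : X} (hp : p ∈ A) (hpa : dist p a < ρ) : ‖f x‖ ≤ K * dist x p := by
    have hxt : x ∈ t := hρt (mem_ball.2 (by linarith))
    simpa only [hfA p hp, dist_zero_right] using hf.dist_le_mul x hxt p (hρt hpa)
  -- Points of `A` outside the Lipschitz neighbourhood are farther from `x` than `a` itself.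
  have norm_le (p : A) : ‖f x‖ ≤ K * dist x p := by
    rcases lt_or_ge (dist (p : X) a) ρ with hpa | hpa
    · exact norm_le_of_mem p.2 hpa
    · have hxp : dist x a ≤ dist x p := by linarith [dist_triangle_left (p : X) a x]
      exact (norm_le_of_mem ha (by simpa using hρ)).trans (by gcongr)
  have : Nonempty A := ⟨⟨a, ha⟩⟩
  rw [Real.norm_of_nonneg infDist_nonneg, infDist_eq_iInf, Real.mul_iInf_of_nonneg K.coe_nonneg]
  exact le_ciInf norm_le

end InfDist

lemma tendsto_exp_mul_inv_mul_pow_nhdsGT_zero {b : ℝ} (hb : 0 < b) (d : ℕ) :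
    Tendsto (fun s : ℝ ↦ Real.exp (b * s⁻¹) * s ^ d) (𝓝[>] 0) atTop := by
  simpa [Function.comp_def] using
    (tendsto_exp_mul_div_rpow_atTop d b hb).comp tendsto_inv_nhdsGT_zero

section FiniteDimensional

variable {E : Type*} [NormedAddCommGroup E] [NormedSpace ℝ E] [FiniteDimensional ℝ E]
  {A : Set E} {a : E}

lemma setLIntegral_eq_top_of_le_comp_infDist [MeasurableSpace E] [BorelSpace E]
    (μ : Measure E) [μ.IsAddHaarMeasure] (hA : IsClosed A) (ha : a ∈ frontier A)
    {h : ℝ → ℝ≥0∞} (h_anti : AntitoneOn h (Ioi 0))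
    (h_lim : Tendsto (fun s ↦ h s * ENNReal.ofReal (s ^ Module.finrank ℝ E)) (𝓝[>] 0) (𝓝 ⊤))
    {g : E → ℝ≥0∞} (hg : ∀ᶠ x in 𝓝[Aᶜ] a, h (infDist x A) ≤ g x)
    {V : Set E} (hV : V ∈ 𝓝[Aᶜ] a) : ∫⁻ x in V, g x ∂μ = ⊤ := by
  have haA : a ∈ A := hA.frontier_subset ha
  have : (𝓝[Aᶜ] a).NeBot := mem_closure_iff_nhdsWithin_neBot.1
    (frontier_eq_closure_inter_closure (s := A) ▸ ha).2
  set c := μ (ball 0 2⁻¹)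
  have hc : c ≠ 0 := (measure_ball_pos μ 0 (by norm_num)).ne'
  have lim_infDist : Tendsto (fun y ↦ 2 * infDist y A) (𝓝[Aᶜ] a) (𝓝[>] 0) := by
    have := tendsto_infDist_nhdsWithin_compl hA haA
    rw [tendsto_nhdsWithin_iff] at this ⊢
    exact ⟨by simpa using this.1.const_mul 2, this.2.mono fun y hy ↦ mul_pos two_pos (mem_Ioi.1 hy)⟩
  have lim_lower := ENNReal.Tendsto.mul_const (b := c) (h_lim.comp lim_infDist)
    (.inl ENNReal.top_ne_zero)
  rw [ENNReal.top_mul hc] at lim_lower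
  refine top_le_iff.1 (le_of_tendsto lim_lower ?_)
  filter_upwards [lim_infDist self_mem_nhdsWithin, nhdsWithin_le_nhds
    (eventually_ball_infDist_subset haA (inter_mem hV (inter_mem hg self_mem_nhdsWithin)))]
    with y hy hball
  set s := infDist y A
  have hgy : ∀ x ∈ ball y s, h (2 * s) ≤ g x := by
    intro x hx
    obtain ⟨-, hgx, hxA⟩ := hball hx
    have hx_pos : 0 < infDist x A := (hA.notMem_iff_infDist_pos ⟨a, haA⟩).1 hxA
    have hx_le : infDist x A ≤ 2 * s := by
      linarith [infDist_le_infDist_add_dist (s := A) (x := x) (y := y), mem_ball.1 hx]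
    exact (h_anti hx_pos hy hx_le).trans hgx
  calc h (2 * s) * ENNReal.ofReal ((2 * s) ^ Module.finrank ℝ E) * c
    _ = h (2 * s) * μ (ball y s) := by
      rw [mul_assoc, ← Measure.addHaar_ball_mul_of_pos μ y hy, mul_right_comm,
        mul_inv_cancel₀ two_ne_zero, one_mul]
    _ = ∫⁻ _ in ball y s, h (2 * s) ∂μ := (setLIntegral_const _ _).symm
    _ ≤ ∫⁻ x in ball y s, g x ∂μ := setLIntegral_mono' measurableSet_ball hgy
    _ ≤ ∫⁻ x in V, g x ∂μ := lintegral_mono_set fun x hx ↦ (hball hx).1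

lemma setLIntegral_exp_inv_rpow_eq_top [MeasurableSpace E] [BorelSpace E]
    (μ : Measure E) [μ.IsAddHaarMeasure] (hA : IsClosed A) (ha : a ∈ frontier A)
    {φ : E → ℝ} (hφ : φ =O[𝓝 a] (infDist · A)) (hφ_pos : ∀ x ∉ A, 0 < φ x)
    {p : ℝ} (hp : 0 < p) {V : Set E} (hV : V ∈ 𝓝[Aᶜ] a) :
    ∫⁻ x in V, ENNReal.ofReal (|Real.exp (φ x)⁻¹| ^ p) ∂μ = ⊤ := by
  obtain ⟨C, hC, hφC⟩ := hφ.exists_pos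
  refine setLIntegral_eq_top_of_le_comp_infDist μ hA ha
    (h := fun s ↦ ENNReal.ofReal (Real.exp (p / C * s⁻¹))) ?_ ?_ ?_ hV
  · intro s hs t _ hst
    have : 0 < s := hs
    dsimp only
    gcongr
  · simp only [← ENNReal.ofReal_mul (Real.exp_pos _).le]
    exact ENNReal.tendsto_ofReal_atTop.comp
      (tendsto_exp_mul_inv_mul_pow_nhdsGT_zero (div_pos hp hC) _)
  · filter_upwards [self_mem_nhdsWithin, nhdsWithin_le_nhds hφC.bound] with x hxA hx
    have hx_pos : 0 < φ x := hφ_pos x hxA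
    rw [Real.norm_of_nonneg hx_pos.le, Real.norm_of_nonneg infDist_nonneg] at hx
    rw [Real.abs_exp, ← Real.exp_mul]
    refine ENNReal.ofReal_le_ofReal (Real.exp_le_exp.2 ?_)
    calc p / C * (infDist x A)⁻¹
      _ = (C * infDist x A)⁻¹ * p := by rw [mul_inv]; ring
      _ ≤ (φ x)⁻¹ * p := by gcongr

theorem smooth_function_with_no_Ln_extension_general [MeasurableSpace E] [BorelSpace E]
    (μ : Measure E) [μ.IsAddHaarMeasure] (hA : IsClosed A) :
    ∃ F : E → ℝ, ContDiffOn ℝ (⊤ : ℕ∞) F Aᶜ ∧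
      ∀ p : ℝ, 0 < p → ∀ a ∈ frontier A, ∀ r : ℝ, 0 < r →
        ∫⁻ x in ball a r \ A, ENNReal.ofReal (|F x| ^ p) ∂μ = ⊤ := by
  obtain ⟨φ, hφ_supp, hφ, hφ_range⟩ :=
    hA.isOpen_compl.exists_contDiff_support_eq (n := (⊤ : ℕ∞))
  have hφ_ne (x : E) : φ x ≠ 0 ↔ x ∉ A := by
    rw [← Function.mem_support, hφ_supp, mem_compl_iff]
  have hφ_pos (x : E) (hx : x ∉ A) : 0 < φ x :=
    (hφ_range ⟨x, rfl⟩).1.lt_of_ne' ((hφ_ne x).2 hx)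
  refine ⟨fun x ↦ Real.exp (φ x)⁻¹,
    (hφ.contDiffOn.inv fun x hx ↦ (hφ_pos x hx).ne').exp, fun p hp a ha r hr ↦ ?_⟩
  obtain ⟨K, t, ht, hK⟩ :=
    (hφ.of_le (by exact_mod_cast le_top)).contDiffAt (x := a) |>.exists_lipschitzOnWith
  have hφ_bigO : φ =O[𝓝 a] (infDist · A) :=
    isBigO_infDist_of_lipschitzOnWith hK ht (hA.frontier_subset ha)
      fun x hx ↦ not_not.1 fun h ↦ (hφ_ne x).1 h hx
  exact setLIntegral_exp_inv_rpow_eq_top μ hA ha hφ_bigO hφ_pos hp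
    (sdiff_mem_nhdsWithin_compl (ball_mem_nhds a hr) A)

end FiniteDimensional

/-- Corollary 4.1: for any nonempty closed proper subset `A ⊊ ℝⁿ`, there is a
function `F` smooth on `ℝⁿ ∖ A` such that near every frontier point of `A` the
lower integral of `|F|ⁿ` over `B(a,r) ∖ A` is infinite (so `F` admits no `Lⁿ`
extension across any frontier point of `A`). -/
theorem smooth_function_with_no_Ln_extension (n : ℕ) (hn : 1 ≤ n)
    (A : Set (EuclideanSpace ℝ (Fin n))) (hAclosed : IsClosed A)
    (hAne : A.Nonempty) (hAproper : A ≠ Set.univ) :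
    ∃ F : EuclideanSpace ℝ (Fin n) → ℝ,
      ContDiffOn ℝ (⊤ : ℕ∞) F Aᶜ ∧
      ∀ a ∈ frontier A, ∀ r : ℝ, 0 < r →
        ∫⁻ x in Metric.ball a r \ A, ENNReal.ofReal (|F x| ^ n) = ⊤ := by
  obtain ⟨F, hF, hF_top⟩ := smooth_function_with_no_Ln_extension_general volume hAclosed
  exact ⟨F, hF, by simpa only [Real.rpow_natCast] using hF_top n (by exact_mod_cast hn)⟩
end
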